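/- arXiv:2203.06645 — 5 statements merged into one kernel-verified Lean document; each statement's English description precedes it below -/
import Mathlib

section
/- The subspace S = ker α̃ has dimension 5, the restriction of B to S is nondegenerate, the B-orthogonal complement S^⊥ of S in ⋀²W is 1-dimensional, and ⋀²W is the internal direct sum of S and S^⊥. -/
theorem aux_abs {K V : Type*} [Field K] [AddCommGroup V] [Module K V] [FiniteDimensional K V]
    (hV : Module.finrank K V = 6) (B : V →ₗ[K] V →ₗ[K] K) (hsymm : ∀ x y, B x y = B y x)
    (hnd : ∀ x, (∀ y, B x y = 0) → x = 0) (f : V →ₗ[K] K) (ω : V) (c : K)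
    (hω : ∀ x, B ω x = c * f x) (hfω : f ω ≠ 0)
    (P : Submodule K V) (hP : ∀ x, x ∈ P ↔ ∀ s ∈ LinearMap.ker f, B x s = 0) :
    Module.finrank K (LinearMap.ker f) = 5 ∧
    (∀ s ∈ LinearMap.ker f, (∀ s' ∈ LinearMap.ker f, B s s' = 0) → s = 0) ∧
    Module.finrank K P = 1 ∧ IsCompl (LinearMap.ker f) P := by
  have hf : f ≠ 0 := by rintro rfl; simp at hfω
  have h5 : Module.finrank K (LinearMap.ker f) = 5 := by
    have h1 := LinearMap.finrank_range_add_finrank_ker f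
    have h2 : LinearMap.range f = ⊤ := LinearMap.range_eq_top.2 (LinearMap.surjective hf)
    rw [h2, finrank_top, Module.finrank_self, hV] at h1
    omega
  have hn : ∀ s ∈ LinearMap.ker f, (∀ s' ∈ LinearMap.ker f, B s s' = 0) → s = 0 := by
    intro s hs h
    apply hnd
    intro y
    have h1 : y - (f y / f ω) • ω ∈ LinearMap.ker f := by
      rw [LinearMap.mem_ker, map_sub, map_smul, smul_eq_mul, div_mul_cancel₀ _ hfω, sub_self]
    have h2 := h _ h1
    rw [LinearMap.mem_ker] at hs
    rw [map_sub, map_smul, hsymm s ω, hω, hs] at h2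
    simpa using h2
  have hωP : ω ∈ P := by
    rw [hP]; intro s hs; rw [hω, LinearMap.mem_ker.1 hs, mul_zero]
  have hdis : Disjoint (LinearMap.ker f) P := by
    rw [Submodule.disjoint_def]
    intro x hx hxP
    exact hn x hx ((hP x).1 hxP)
  have hcod : Codisjoint (LinearMap.ker f) P := by
    rw [codisjoint_iff, eq_top_iff]
    intro y _
    have h1 : y - (f y / f ω) • ω ∈ LinearMap.ker f := by
      rw [LinearMap.mem_ker, map_sub, map_smul, smul_eq_mul, div_mul_cancel₀ _ hfω, sub_self]
    exact Submodule.mem_sup.2 ⟨_, h1, _, P.smul_mem (f y / f ω) hωP, by abel⟩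
  have hc : IsCompl (LinearMap.ker f) P := ⟨hdis, hcod⟩
  refine ⟨h5, hn, ?_, hc⟩
  have := Submodule.finrank_add_eq_of_isCompl hc
  omega

open scoped Pointwise in
theorem aux_span {K W : Type*} [Field K] [AddCommGroup W] [Module K W]
    (b : Module.Basis (Fin 4) K W) (E : Fin 4 → Fin 4 → ⋀[K]^2 W)
    (hE : ∀ i j, (E i j : ExteriorAlgebra K W)
      = ExteriorAlgebra.ι K (b i) * ExteriorAlgebra.ι K (b j)) (x : ⋀[K]^2 W) :
    ∃ p q r s t u : K, x = p • E 0 1 + q • E 0 2 + r • E 0 3 + s • E 1 2 + t • E 1 3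
      + u • E 2 3 := by
  have hanti : ∀ i j, E i j = - E j i := by
    intro i j
    apply Subtype.ext
    rw [Submodule.coe_neg, hE, hE, eq_neg_iff_add_eq_zero]
    exact ExteriorAlgebra.ι_add_mul_swap _ _
  have hdiag : ∀ i, E i i = 0 := by
    intro i
    apply Subtype.ext
    rw [hE]; simp
  have hP : ∀ i j, E i j ∈ Submodule.span K {E 0 1, E 0 2, E 0 3, E 1 2, E 1 3, E 2 3} := by
    have key : ∀ i j : Fin 4, i < j →
        E i j ∈ Submodule.span K {E 0 1, E 0 2, E 0 3, E 1 2, E 1 3, E 2 3} := by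
      intro i j hij
      apply Submodule.subset_span
      fin_cases i <;> fin_cases j <;> simp at hij ⊢
    intro i j
    rcases lt_trichotomy i j with h | h | h
    · exact key i j h
    · rw [h, hdiag]; exact Submodule.zero_mem _
    · have := Submodule.neg_mem _ (key j i h)
      rwa [← hanti i j] at this
  have hx : x ∈ Submodule.span K {E 0 1, E 0 2, E 0 3, E 1 2, E 1 3, E 2 3} := by
    have hx := x.2
    have h1 : LinearMap.range (ExteriorAlgebra.ι K (M := W))
        = Submodule.span K (Set.range fun i => ExteriorAlgebra.ι K (b i)) := by
      rw [← Submodule.map_top, ← b.span_eq, Submodule.map_span, ← Set.range_comp]; rfl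
    have h2 : (x : ExteriorAlgebra K W) ∈ Submodule.span K
        ((Set.range fun i => ExteriorAlgebra.ι K (b i))
          * (Set.range fun i => ExteriorAlgebra.ι K (b i))) := by
      rw [← Submodule.span_mul_span, ← h1, ← pow_two]; exact hx
    have h3 : (x : ExteriorAlgebra K W) ∈ Submodule.map (Submodule.subtype _)
        (Submodule.span K {E 0 1, E 0 2, E 0 3, E 1 2, E 1 3, E 2 3}) := by
      refine Submodule.span_le.2 ?_ h2
      rintro _ ⟨_, ⟨i, rfl⟩, _, ⟨j, rfl⟩, rfl⟩
      exact ⟨E i j, hP i j, hE i j⟩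
    obtain ⟨y, hy, hxy⟩ := h3
    have : y = x := Subtype.ext hxy
    exact this ▸ hy
  simp only [Submodule.mem_span_insert, Submodule.mem_span_singleton] at hx
  obtain ⟨p, _, ⟨q, _, ⟨r, _, ⟨s, _, ⟨t, _, ⟨u, rfl⟩, rfl⟩, rfl⟩, rfl⟩, rfl⟩, h⟩ := hx
  exact ⟨p, q, r, s, t, u, by rw [h]; abel⟩

theorem aux_pf {K W : Type*} [Field K] [AddCommGroup W] [Module K W]
    (b : Module.Basis (Fin 4) K W) (α : W →ₗ[K] W →ₗ[K] K)
    (hαalt : ∀ v, α v v = 0) (hαnd : ∀ v, (∀ w, α v w = 0) → v = 0) :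
    α (b 0) (b 1) * α (b 2) (b 3) - α (b 0) (b 2) * α (b 1) (b 3)
      + α (b 0) (b 3) * α (b 1) (b 2) ≠ 0 := by
  intro h
  have hneg : ∀ v w, α v w = - α w v := by
    intro v w
    have := hαalt (v + w)
    simp only [map_add, LinearMap.add_apply, hαalt] at this
    linear_combination this
  set M : Matrix (Fin 4) (Fin 4) K := Matrix.of fun i j => α (b i) (b j) with hM
  have hdet : M.det = 0 := by
    have : M.det = (α (b 0) (b 1) * α (b 2) (b 3) - α (b 0) (b 2) * α (b 1) (b 3)
      + α (b 0) (b 3) * α (b 1) (b 2)) ^ 2 := by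
      simp [Matrix.det_succ_row_zero, Fin.sum_univ_succ, hM, Fin.succAbove, hαalt]
      rw [hneg (b 1) (b 0), hneg (b 2) (b 0), hneg (b 3) (b 0), hneg (b 2) (b 1),
        hneg (b 3) (b 1), hneg (b 3) (b 2)]
      ring
    rw [this, h]; ring
  obtain ⟨v, hv, hvM⟩ := Matrix.exists_vecMul_eq_zero_iff.2 hdet
  apply hv
  have h0 : ∑ i, v i • b i = 0 := by
    apply hαnd
    have : α (∑ i, v i • b i) = 0 := by
      apply b.ext
      intro j
      have := congrFun hvM j
      simpa [Matrix.vecMul, dotProduct, hM] using this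
    intro w; rw [this]; rfl
  have := Fintype.linearIndependent_iff.1 b.linearIndependent v h0
  exact funext this

theorem aux_detZ : ∀ i j k l : Fin 4, i < j → k < l → Matrix.det
      (Matrix.of fun r s : Fin 4 => if ![i, j, k, l] s = r then (1 : ℤ) else 0)
      = if i = k ∨ i = l ∨ j = k ∨ j = l then 0 else (-1) ^ (i.val + j.val + 1) := by
  decide +kernel

theorem aux_det (K : Type*) [Field K] (i j k l : Fin 4) (hij : i < j) (hkl : k < l) : Matrix.det
      (Matrix.of fun r s : Fin 4 => if ![i, j, k, l] s = r then (1 : K) else 0)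
      = if i = k ∨ i = l ∨ j = k ∨ j = l then 0 else (-1) ^ (i.val + j.val + 1) := by
  have h := congrArg (Int.castRingHom K) (aux_detZ i j k l hij hkl)
  rw [RingHom.map_det] at h
  convert h using 1
  · congr 1
    ext r s
    simp [apply_ite]
  · split_ifs <;> simp

/-- For a symplectic form `α` on the 4-dimensional space `W`, with `α̃ : ⋀²W → K` the induced
functional (`α̃(v ∧ w) = α(v,w)`) and `S = ker α̃`: `S` is 5-dimensional, the restriction of `B`
to `S` is nondegenerate, the `B`-orthogonal complement `S^⊥` is 1-dimensional, and `⋀²W` is the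
internal direct sum of `S` and `S^⊥`. -/
theorem stmt_8 (K : Type*) [Field K] (hK2 : (2 : K) ≠ 0)
    (W : Type*) [AddCommGroup W] [Module K W] [FiniteDimensional K W]
    (hW : Module.finrank K W = 4)
    (wedge : ⋀[K]^2 W →ₗ[K] ⋀[K]^2 W →ₗ[K] ⋀[K]^4 W)
    (hwedge : ∀ x y : ⋀[K]^2 W,
      (wedge x y : ExteriorAlgebra K W) = (x : ExteriorAlgebra K W) * (y : ExteriorAlgebra K W))
    (θ : ⋀[K]^4 W →ₗ[K] K) (hθ : θ ≠ 0)
    (B : ⋀[K]^2 W →ₗ[K] ⋀[K]^2 W →ₗ[K] K)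
    (hB : ∀ x y : ⋀[K]^2 W, B x y = θ (wedge x y))
    (α : W →ₗ[K] W →ₗ[K] K)
    (hαalt : ∀ v, α v v = 0) (hαnd : ∀ v, (∀ w, α v w = 0) → v = 0)
    (αt : ⋀[K]^2 W →ₗ[K] K)
    (hαt : ∀ (x : ⋀[K]^2 W) (v w : W),
      (x : ExteriorAlgebra K W) = ExteriorAlgebra.ι K v * ExteriorAlgebra.ι K w →
      αt x = α v w)
    (Sperp : Submodule K (⋀[K]^2 W))
    (hSperp : ∀ x : ⋀[K]^2 W, x ∈ Sperp ↔ ∀ s ∈ LinearMap.ker αt, B x s = 0) :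
    Module.finrank K (LinearMap.ker αt) = 5 ∧
    (∀ s ∈ LinearMap.ker αt, (∀ s' ∈ LinearMap.ker αt, B s s' = 0) → s = 0) ∧
    Module.finrank K Sperp = 1 ∧
    IsCompl (LinearMap.ker αt) Sperp := by
  let b : Module.Basis (Fin 4) K W := Module.finBasisOfFinrankEq K W hW
  let E : Fin 4 → Fin 4 → ⋀[K]^2 W := fun i j => exteriorPower.ιMulti K 2 ![b i, b j]
  have hE : ∀ i j, (E i j : ExteriorAlgebra K W)
      = ExteriorAlgebra.ι K (b i) * ExteriorAlgebra.ι K (b j) := by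
    intro i j
    simp [E, ExteriorAlgebra.ιMulti_apply]
  let F : W [⋀^Fin 4]→ₗ[K] K := θ.compAlternatingMap (exteriorPower.ιMulti K 4)
  have hF := F.eq_smul_basis_det b
  have hc : F b ≠ 0 := by
    intro h
    apply hθ
    apply exteriorPower.linearMap_ext
    rw [h, zero_smul] at hF
    ext v
    exact congrArg (fun G : W [⋀^Fin 4]→ₗ[K] K => G v) hF
  set c := F b with hcdef
  have hBE : ∀ i j k l, B (E i j) (E k l) = c * Matrix.det
      (Matrix.of fun r s : Fin 4 => if ![i, j, k, l] s = r then (1 : K) else 0) := by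
    intro i j k l
    have h1 : wedge (E i j) (E k l) = exteriorPower.ιMulti K 4 (fun s => b (![i, j, k, l] s)) := by
      apply Subtype.ext
      rw [hwedge, hE, hE]
      simp [ExteriorAlgebra.ιMulti_apply, mul_assoc, Matrix.vecTail]
    have h2 : F (fun s => b (![i, j, k, l] s)) = c * b.det (fun s => b (![i, j, k, l] s)) := by
      conv_lhs => rw [hF]
      rfl
    rw [hB, h1]
    refine h2.trans ?_
    rw [Module.Basis.det_apply]
    congr 2
    ext r s
    simp [Module.Basis.toMatrix_apply, Finsupp.single_apply]
  have hBE2 : ∀ i j k l : Fin 4, i < j → k < l → B (E i j) (E k l) = c *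
      if i = k ∨ i = l ∨ j = k ∨ j = l then 0 else (-1) ^ (i.val + j.val + 1) := by
    intro i j k l hij hkl
    rw [hBE, aux_det K i j k l hij hkl]
  clear_value c E b
  have hsp := aux_span b E hE
  have hα : ∀ i j, αt (E i j) = α (b i) (b j) := fun i j => hαt _ _ _ (hE i j)
  have hpf := aux_pf b α hαalt hαnd
  have hV : Module.finrank K (⋀[K]^2 W) = 6 := by
    rw [exteriorPower.finrank_eq, hW]; rfl
  have hBx : ∀ p q r s t u p' q' r' s' t' u' : K,
      B (p • E 0 1 + q • E 0 2 + r • E 0 3 + s • E 1 2 + t • E 1 3 + u • E 2 3)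
        (p' • E 0 1 + q' • E 0 2 + r' • E 0 3 + s' • E 1 2 + t' • E 1 3 + u' • E 2 3)
      = c * (p * u' - q * t' + r * s' + s * r' - t * q' + u * p') := by
    intro p q r s t u p' q' r' s' t' u'
    simp only [map_add, map_smul, LinearMap.add_apply, LinearMap.smul_apply]
    simp [hBE2]
    ring
  refine aux_abs hV B ?_ ?_ αt (α (b 2) (b 3) • E 0 1 + (-α (b 1) (b 3)) • E 0 2
    + α (b 1) (b 2) • E 0 3 + α (b 0) (b 3) • E 1 2 + (-α (b 0) (b 2)) • E 1 3
    + α (b 0) (b 1) • E 2 3) c ?_ ?_ Sperp hSperp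
  · intro x y
    obtain ⟨p, q, r, s, t, u, rfl⟩ := hsp x
    obtain ⟨p', q', r', s', t', u', rfl⟩ := hsp y
    rw [hBx, hBx]; ring
  · intro x hx
    obtain ⟨p, q, r, s, t, u, rfl⟩ := hsp x
    have h := fun p' q' r' s' t' u' => (hBx p q r s t u p' q' r' s' t' u').symm.trans (hx _)
    have h1 := h 1 0 0 0 0 0
    have h2 := h 0 1 0 0 0 0
    have h3 := h 0 0 1 0 0 0
    have h4 := h 0 0 0 1 0 0
    have h5 := h 0 0 0 0 1 0
    have h6 := h 0 0 0 0 0 1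
    simp [hc] at h1 h2 h3 h4 h5 h6
    simp [h1, h2, h3, h4, h5, h6]
  · intro x
    obtain ⟨p, q, r, s, t, u, rfl⟩ := hsp x
    rw [hBx]
    simp only [map_add, map_smul, hα, smul_eq_mul]
    ring
  · simp only [map_add, map_smul, hα, smul_eq_mul]
    intro h
    apply mul_ne_zero hK2 hpf
    linear_combination h
end

section
/- For η ∈ ⋀²W, define the bilinear form α_η on W by α_η(v, w) := θ(v ∧ w ∧ η). Then α_η is alternating, and α_η is nondegenerate if and only if η ∧ η ≠ 0 in ⋀⁴W (equivalently, if and only if η is not decomposable). -/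
set_option linter.unusedSimpArgs false

section aux10
open ExteriorAlgebra

theorem aux_swap {K W : Type*} [Field K] [AddCommGroup W] [Module K W] (x y : W) :
    ι K y * ι K x = -(ι K x * ι K y) :=
  eq_neg_of_add_eq_zero_left (ι_add_mul_swap y x)

theorem aux_swap3 {K W : Type*} [Field K] [AddCommGroup W] [Module K W] (x y : W)
    (a : ExteriorAlgebra K W) :
    ι K y * (ι K x * a) = -(ι K x * (ι K y * a)) := by
  rw [← mul_assoc, aux_swap, neg_mul, mul_assoc]

theorem aux_sq3 {K W : Type*} [Field K] [AddCommGroup W] [Module K W] (x : W)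
    (a : ExteriorAlgebra K W) :
    ι K x * (ι K x * a) = 0 := by
  rw [← mul_assoc, ι_sq_zero, zero_mul]

theorem aux_coords {K W : Type*} [Field K] [AddCommGroup W] [Module K W]
    (b : Module.Basis (Fin 4) K W) (η : ExteriorAlgebra K W) (hη : η ∈ ⋀[K]^2 W) :
    ∃ p q r s t u : K, η = p • (ι K (b 0) * ι K (b 1)) + q • (ι K (b 0) * ι K (b 2))
      + r • (ι K (b 0) * ι K (b 3)) + s • (ι K (b 1) * ι K (b 2))
      + t • (ι K (b 1) * ι K (b 3)) + u • (ι K (b 2) * ι K (b 3)) := by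
  rw [← ExteriorAlgebra.ιMulti_span_fixedDegree] at hη
  induction hη using Submodule.span_induction with
  | mem x h =>
    obtain ⟨v, rfl⟩ := h
    rw [ιMulti_apply]
    simp only [List.ofFn_succ, List.ofFn_zero, List.prod_cons, List.prod_nil, mul_one]
    rw [← b.sum_repr (v 0), ← b.sum_repr (v (Fin.succ 0))]
    generalize b.repr (v 0) = f
    generalize b.repr (v (Fin.succ 0)) = g
    refine ⟨f 0 * g 1 - f 1 * g 0, f 0 * g 2 - f 2 * g 0, f 0 * g 3 - f 3 * g 0,
      f 1 * g 2 - f 2 * g 1, f 1 * g 3 - f 3 * g 1, f 2 * g 3 - f 3 * g 2, ?_⟩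
    simp only [Fin.sum_univ_four, map_add, map_smul, add_mul, mul_add, smul_mul_assoc,
      mul_smul_comm, ι_sq_zero, aux_swap (b 0) (b 1), aux_swap (b 0) (b 2), aux_swap (b 0) (b 3),
      aux_swap (b 1) (b 2), aux_swap (b 1) (b 3), aux_swap (b 2) (b 3)]
    module
  | zero => exact ⟨0, 0, 0, 0, 0, 0, by simp⟩
  | add x y _ _ hx hy =>
    obtain ⟨p, q, r, s, t, u, rfl⟩ := hx
    obtain ⟨p', q', r', s', t', u', rfl⟩ := hy
    exact ⟨p + p', q + q', r + r', s + s', t + t', u + u', by module⟩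
  | smul a x _ hx =>
    obtain ⟨p, q, r, s, t, u, rfl⟩ := hx
    exact ⟨a * p, a * q, a * r, a * s, a * t, a * u, by module⟩

theorem aux_basis {K W : Type*} [Field K] [AddCommGroup W] [Module K W] [FiniteDimensional K W]
    (hW : Module.finrank K W = 4) (v : W) (hv : v ≠ 0) :
    ∃ b : Module.Basis (Fin 4) K W, b 0 = v := by
  have hli : LinearIndepOn K id ({v} : Set W) := LinearIndepOn.singleton (v := id) hv
  let B := Module.Basis.extend hli
  have : Fintype (hli.extend (Set.subset_univ {v})) := FiniteDimensional.fintypeBasisIndex B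
  have hc : Fintype.card (hli.extend (Set.subset_univ {v})) = 4 := by
    rw [← Module.finrank_eq_card_basis B, hW]
  let e := Fintype.equivFinOfCardEq hc
  let i : hli.extend (Set.subset_univ {v}) := ⟨v, hli.subset_extend _ rfl⟩
  refine ⟨B.reindex (e.trans (Equiv.swap (e i) 0)), ?_⟩
  simp [B, i]

/-- Main computation in a basis. -/
theorem aux_main {K W : Type*} [Field K] [AddCommGroup W] [Module K W]
    (b : Module.Basis (Fin 4) K W)
    (θ : ⋀[K]^4 W →ₗ[K] K) (hθ : θ ≠ 0)
    (hmem : ∀ (v w : W) (y : ⋀[K]^2 W),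
      ExteriorAlgebra.ι K v * ExteriorAlgebra.ι K w * (y : ExteriorAlgebra K W) ∈ ⋀[K]^4 W)
    (η : ⋀[K]^2 W)
    (αη : W →ₗ[K] W →ₗ[K] K)
    (hαη : ∀ v w : W,
      αη v w = θ ⟨ExteriorAlgebra.ι K v * ExteriorAlgebra.ι K w * (η : ExteriorAlgebra K W),
        hmem v w η⟩) :
    ∃ p q r s t u c : K, c ≠ 0 ∧ ι K (b 0) * (ι K (b 1) * (ι K (b 2) * ι K (b 3))) ≠ 0 ∧
      (η : ExteriorAlgebra K W) = p • (ι K (b 0) * ι K (b 1)) + q • (ι K (b 0) * ι K (b 2))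
      + r • (ι K (b 0) * ι K (b 3)) + s • (ι K (b 1) * ι K (b 2))
      + t • (ι K (b 1) * ι K (b 3)) + u • (ι K (b 2) * ι K (b 3)) ∧
      αη (b 0) (b 1) = u * c ∧ αη (b 0) (b 2) = -t * c ∧ αη (b 0) (b 3) = s * c ∧
      αη (b 1) (b 2) = r * c ∧ αη (b 1) (b 3) = -q * c ∧ αη (b 2) (b 3) = p * c := by
  obtain ⟨p, q, r, s, t, u, h⟩ := aux_coords b η η.2
  let E : ⋀[K]^4 W := exteriorPower.ιMulti K 4 b
  have hE : (E : ExteriorAlgebra K W) = ι K (b 0) * (ι K (b 1) * (ι K (b 2) * ι K (b 3))) := by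
    simp [E, ιMulti_apply]
    rfl
  have hc : θ E ≠ 0 := by
    intro h0
    apply hθ
    apply exteriorPower.linearMap_ext
    apply Module.Basis.ext_alternating b
    intro v hv
    have hb : Function.Bijective v := Finite.injective_iff_bijective.mp hv
    have : (fun i => b (v i)) = b ∘ (Equiv.ofBijective v hb) := rfl
    rw [this, AlternatingMap.map_perm]
    have h0' : (θ.compAlternatingMap (exteriorPower.ιMulti K 4)) b = 0 := h0
    rw [h0']
    simp
  have hE0 : (E : ExteriorAlgebra K W) ≠ 0 := by
    intro h0
    apply hc
    rw [show E = 0 from Subtype.ext h0, map_zero]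
  have key : ∀ v w : W, ∀ k : K, ι K v * ι K w * (η : ExteriorAlgebra K W) =
      k • (ι K (b 0) * (ι K (b 1) * (ι K (b 2) * ι K (b 3)))) → αη v w = k * θ E := by
    intro v w k hk
    have e : (⟨ι K v * ι K w * (η : ExteriorAlgebra K W), hmem v w η⟩ : ⋀[K]^4 W) = k • E := by
      apply Subtype.ext
      simp only [hk, Submodule.coe_smul, hE]
    rw [hαη v w, e, map_smul, smul_eq_mul]
  refine ⟨p, q, r, s, t, u, θ E, hc, hE ▸ hE0, h, ?_, ?_, ?_, ?_, ?_, ?_⟩ <;>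
  · apply key
    rw [h]
    simp only [mul_add, mul_smul_comm, mul_assoc, ι_sq_zero, aux_sq3,
      aux_swap (b 0) (b 1), aux_swap (b 0) (b 2), aux_swap (b 0) (b 3),
      aux_swap (b 1) (b 2), aux_swap (b 1) (b 3), aux_swap (b 2) (b 3),
      aux_swap3 (b 0) (b 1), aux_swap3 (b 0) (b 2), aux_swap3 (b 0) (b 3),
      aux_swap3 (b 1) (b 2), aux_swap3 (b 1) (b 3), aux_swap3 (b 2) (b 3), mul_neg, mul_zero]
    module

end aux10


/-- For `η ∈ ⋀²W`, the bilinear form `α_η(v, w) = θ(v ∧ w ∧ η)` on `W` is alternating, and it is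
nondegenerate iff `η ∧ η ≠ 0` in `⋀⁴W`, equivalently iff `η` is not decomposable. -/
theorem stmt_10 (K : Type*) [Field K] (hK2 : (2 : K) ≠ 0)
    (W : Type*) [AddCommGroup W] [Module K W] [FiniteDimensional K W]
    (hW : Module.finrank K W = 4)
    (wedge : ⋀[K]^2 W →ₗ[K] ⋀[K]^2 W →ₗ[K] ⋀[K]^4 W)
    (hwedge : ∀ x y : ⋀[K]^2 W,
      (wedge x y : ExteriorAlgebra K W) = (x : ExteriorAlgebra K W) * (y : ExteriorAlgebra K W))
    (θ : ⋀[K]^4 W →ₗ[K] K) (hθ : θ ≠ 0)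
    (hmem : ∀ (v w : W) (y : ⋀[K]^2 W),
      ExteriorAlgebra.ι K v * ExteriorAlgebra.ι K w * (y : ExteriorAlgebra K W) ∈ ⋀[K]^4 W)
    (η : ⋀[K]^2 W)
    (αη : W →ₗ[K] W →ₗ[K] K)
    (hαη : ∀ v w : W,
      αη v w = θ ⟨ExteriorAlgebra.ι K v * ExteriorAlgebra.ι K w * (η : ExteriorAlgebra K W),
        hmem v w η⟩) :
    (∀ v, αη v v = 0) ∧
    ((∀ v, (∀ w, αη v w = 0) → v = 0) ↔ wedge η η ≠ 0) ∧
    ((∀ v, (∀ w, αη v w = 0) → v = 0) ↔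
      ¬ ∃ v w : W, (η : ExteriorAlgebra K W)
        = ExteriorAlgebra.ι K v * ExteriorAlgebra.ι K w) := by
  have halt : ∀ v, αη v v = 0 := by
    intro v
    rw [hαη]
    convert map_zero θ
    simp
  have hskew : ∀ v w, αη w v = - αη v w := by
    intro v w
    have := halt (v + w)
    simp only [map_add, LinearMap.add_apply, halt] at this
    linear_combination this
  -- degenerate implies decomposable
  have h1 : (¬ ∀ v, (∀ w, αη v w = 0) → v = 0) → ∃ v w : W, (η : ExteriorAlgebra K W)
        = ExteriorAlgebra.ι K v * ExteriorAlgebra.ι K w := by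
    intro h
    push Not at h
    obtain ⟨v, hv, hv0⟩ := h
    obtain ⟨b, rfl⟩ := aux_basis hW v hv0
    obtain ⟨p, q, r, s, t, u, c, hc, -, hη, h01, h02, h03, -⟩ :=
      aux_main b θ hθ hmem η αη hαη
    rw [hv] at h01 h02 h03
    have hu : u = 0 := by simpa [hc] using h01.symm
    have ht : t = 0 := by simpa [hc] using h02.symm
    have hs : s = 0 := by simpa [hc] using h03.symm
    refine ⟨b 0, p • b 1 + q • b 2 + r • b 3, ?_⟩
    rw [hη, hu, ht, hs]
    simp [mul_add]
  -- decomposable implies square zero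
  have h2 : (∃ v w : W, (η : ExteriorAlgebra K W)
        = ExteriorAlgebra.ι K v * ExteriorAlgebra.ι K w) → wedge η η = 0 := by
    rintro ⟨v, w, h⟩
    apply Subtype.ext
    rw [hwedge, h, mul_assoc, aux_swap3 v w, mul_neg, aux_sq3]
    simp
  -- square zero implies degenerate
  have h3 : wedge η η = 0 → ¬ ∀ v, (∀ w, αη v w = 0) → v = 0 := by
    intro h0 hnd
    let b : Module.Basis (Fin 4) K W := Module.finBasisOfFinrankEq K W hW
    obtain ⟨p, q, r, s, t, u, c, hc, hE, hη, h01, h02, h03, h12, h13, h23⟩ :=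
      aux_main b θ hθ hmem η αη hαη
    have hsq : (η : ExteriorAlgebra K W) * η = (2 * (p * u - q * t + r * s)) •
        (ExteriorAlgebra.ι K (b 0) * (ExteriorAlgebra.ι K (b 1) *
          (ExteriorAlgebra.ι K (b 2) * ExteriorAlgebra.ι K (b 3)))) := by
      rw [hη]
      simp only [add_mul, smul_mul_assoc, mul_add, mul_smul_comm, mul_assoc,
        ExteriorAlgebra.ι_sq_zero, aux_sq3,
        aux_swap (b 0) (b 1), aux_swap (b 0) (b 2), aux_swap (b 0) (b 3),
        aux_swap (b 1) (b 2), aux_swap (b 1) (b 3), aux_swap (b 2) (b 3),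
        aux_swap3 (b 0) (b 1), aux_swap3 (b 0) (b 2), aux_swap3 (b 0) (b 3),
        aux_swap3 (b 1) (b 2), aux_swap3 (b 1) (b 3), aux_swap3 (b 2) (b 3), mul_neg, mul_zero]
      module
    rw [← hwedge, h0, Submodule.coe_zero] at hsq
    have hpf : p * u - q * t + r * s = 0 := by
      have := (smul_eq_zero.mp hsq.symm).resolve_right hE
      exact (mul_eq_zero.mp this).resolve_left hK2
    have h10 := hskew (b 0) (b 1)
    have h20 := hskew (b 0) (b 2)
    have h30 := hskew (b 0) (b 3)
    have h21 := hskew (b 1) (b 2)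
    have h31 := hskew (b 1) (b 3)
    have h32 := hskew (b 2) (b 3)
    rw [h01] at h10
    rw [h02] at h20
    rw [h03] at h30
    rw [h12] at h21
    rw [h13] at h31
    rw [h23] at h32
    have comb : ∀ x0 x1 x2 x3 : K,
        (- (x1 * u) + x2 * t - x3 * s = 0) → (x0 * u - x2 * r + x3 * q = 0) →
        (- (x0 * t) + x1 * r - x3 * p = 0) → (x0 * s - x1 * q + x2 * p = 0) →
        x0 = 0 ∧ x1 = 0 ∧ x2 = 0 ∧ x3 = 0 := by
      intro x0 x1 x2 x3 e0 e1 e2 e3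
      have hz : x0 • b 0 + x1 • b 1 + x2 • b 2 + x3 • b 3 = 0 := by
        apply hnd
        intro w
        have : αη (x0 • b 0 + x1 • b 1 + x2 • b 2 + x3 • b 3) = 0 := by
          apply b.ext
          intro i
          fin_cases i <;>
            simp only [map_add, map_smul, LinearMap.add_apply, LinearMap.smul_apply, halt,
              LinearMap.zero_apply, smul_eq_mul, Fin.zero_eta, Fin.mk_one, Fin.reduceFinMk,
              h01, h02, h03, h12, h13, h23, h10, h20, h30, h21, h31, h32]
          · linear_combination c * e0
          · linear_combination c * e1
          · linear_combination c * e2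
          · linear_combination c * e3
        rw [this, LinearMap.zero_apply]
      have hli := Fintype.linearIndependent_iff.mp b.linearIndependent ![x0, x1, x2, x3]
        (by simpa [Fin.sum_univ_four] using hz)
      exact ⟨hli 0, hli 1, hli 2, hli 3⟩
    obtain ⟨-, hp, hq, hr⟩ := comb 0 p q r (by linear_combination -hpf) (by ring) (by ring)
      (by ring)
    obtain ⟨-, -, hs, ht⟩ := comb (-p) 0 s t (by ring) (by linear_combination -hpf) (by ring)
      (by ring)
    obtain ⟨-, -, -, hu⟩ := comb (-q) (-s) 0 u (by ring) (by ring) (by linear_combination -hpf)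
      (by ring)
    have := comb 1 0 0 0 (by ring) (by simp [hu]) (by simp [ht]) (by simp [hs])
    exact one_ne_zero this.1
  refine ⟨halt, ⟨fun h h0 => h3 h0 h, fun h => ?_⟩, ⟨fun h hd => h3 (h2 hd) h, fun h => ?_⟩⟩
  · by_contra hn
    exact h (h2 (h1 hn))
  · by_contra hn
    exact h (h1 hn)
end

section
/- A 3-dimensional subspace U ⊆ ⋀²W is totally isotropic for B if and only if either U = span{v ∧ w : v, w ∈ F} for some 3-dimensional subspace F ⊆ W, or U = span{v ∧ w : v ∈ N, w ∈ W} for some 1-dimensional subspace N ⊆ W; moreover in the first case F is uniquely determined by U, and in the second case N is uniquely determined by U. -/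
namespace S11
variable {K : Type*} [Field K] {W : Type*} [AddCommGroup W] [Module K W]

/-- the wedge of two vectors -/
noncomputable def p (v w : W) : ⋀[K]^2 W := exteriorPower.ιMulti K 2 ![v, w]

lemma p_coe (v w : W) : ((p v w : ⋀[K]^2 W) : ExteriorAlgebra K W)
    = ExteriorAlgebra.ι K v * ExteriorAlgebra.ι K w := by
  simp [p, ExteriorAlgebra.ιMulti_apply]

lemma eq_p_iff (x : ⋀[K]^2 W) (v w : W) : ((x : ExteriorAlgebra K W)
    = ExteriorAlgebra.ι K v * ExteriorAlgebra.ι K w) ↔ x = p v w := by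
  rw [← p_coe, Subtype.ext_iff]

lemma p_add_left (a b c : W) : (p (a + b) c : ⋀[K]^2 W) = p a c + p b c := by
  apply Subtype.ext; simp [p_coe, add_mul]
lemma p_add_right (a b c : W) : (p a (b + c) : ⋀[K]^2 W) = p a b + p a c := by
  apply Subtype.ext; simp [p_coe, mul_add]
lemma p_smul_left (r : K) (a b : W) : (p (r • a) b : ⋀[K]^2 W) = r • p a b := by
  apply Subtype.ext; simp [p_coe]
lemma p_smul_right (r : K) (a b : W) : (p a (r • b) : ⋀[K]^2 W) = r • p a b := by
  apply Subtype.ext; simp [p_coe]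
lemma p_self (a : W) : (p a a : ⋀[K]^2 W) = 0 := by
  apply Subtype.ext; simp [p_coe]
lemma p_swap (a b : W) : (p a b : ⋀[K]^2 W) = - p b a := by
  apply Subtype.ext; simp only [p_coe, Submodule.coe_neg]
  exact eq_neg_of_add_eq_zero_left (ExteriorAlgebra.ι_add_mul_swap a b)
lemma p_neg_left (a b : W) : (p (-a) b : ⋀[K]^2 W) = - p a b := by
  apply Subtype.ext; simp [p_coe]
lemma p_neg_right (a b : W) : (p a (-b) : ⋀[K]^2 W) = - p a b := by
  apply Subtype.ext; simp [p_coe]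
lemma p_zero_left (b : W) : (p 0 b : ⋀[K]^2 W) = 0 := by
  apply Subtype.ext; simp [p_coe]
lemma p_zero_right (b : W) : (p b 0 : ⋀[K]^2 W) = 0 := by
  apply Subtype.ext; simp [p_coe]

lemma span4 (e : Fin 4 → W) (he : ⊤ ≤ Submodule.span K (Set.range e)) (v : W) :
    ∃ a b c d : K, v = a • e 0 + b • e 1 + c • e 2 + d • e 3 := by
  have hv : v ∈ Submodule.span K (Set.range e) := he trivial
  obtain ⟨c, rfl⟩ := (Submodule.mem_span_range_iff_exists_fun K).1 hv
  exact ⟨c 0, c 1, c 2, c 3, by simp [Fin.sum_univ_four]⟩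

lemma expand (e0 e1 e2 e3 : W)
    (he : ∀ v : W, ∃ a b c d : K, v = a • e0 + b • e1 + c • e2 + d • e3) (x : ⋀[K]^2 W) :
    ∃ a b c d f g : K, x = a • p e0 e1 + b • p e0 e2 + c • p e0 e3 + d • p e1 e2
      + f • p e1 e3 + g • p e2 e3 := by
  have hx : x ∈ Submodule.span K (Set.range (exteriorPower.ιMulti K 2 (M := W))) := by
    rw [exteriorPower.ιMulti_span]; trivial
  induction hx using Submodule.span_induction with
  | mem x h =>
    obtain ⟨v, rfl⟩ := h
    have : exteriorPower.ιMulti K 2 v = p (v 0) (v 1) := by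
      rw [p]; congr 1; ext i; fin_cases i <;> rfl
    rw [this]
    obtain ⟨a, b, c, d, h1⟩ := he (v 0)
    obtain ⟨a', b', c', d', h2⟩ := he (v 1)
    rw [h1, h2]
    simp only [p_add_left, p_add_right, p_smul_left, p_smul_right, p_self, smul_zero]
    rw [p_swap e1 e0, p_swap e2 e0, p_swap e3 e0, p_swap e2 e1, p_swap e3 e1, p_swap e3 e2]
    exact ⟨a * b' - b * a', a * c' - c * a', a * d' - d * a', b * c' - c * b',
      b * d' - d * b', c * d' - d * c', by module⟩
  | zero => exact ⟨0, 0, 0, 0, 0, 0, by simp⟩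
  | add x y _ _ hx hy =>
    obtain ⟨a, b, c, d, f, g, rfl⟩ := hx
    obtain ⟨a', b', c', d', f', g', rfl⟩ := hy
    exact ⟨a + a', b + b', c + c', d + d', f + f', g + g', by module⟩
  | smul r x _ hx =>
    obtain ⟨a, b, c, d, f, g, rfl⟩ := hx
    exact ⟨r * a, r * b, r * c, r * d, r * f, r * g, by module⟩

lemma decomp1 (e0 e1 e2 e3 : W) (a b c d f g : K) (ha : a ≠ 0) (h : a * g - b * f + c * d = 0) :
    ∃ v w : W, a • p e0 e1 + b • p e0 e2 + c • p e0 e3 + d • p e1 e2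
      + f • p e1 e3 + g • p e2 e3 = (p v w : ⋀[K]^2 W) := by
  refine ⟨e0 - (a⁻¹ * d) • e2 - (a⁻¹ * f) • e3, a • e1 + b • e2 + c • e3, ?_⟩
  simp only [sub_eq_add_neg, ← neg_smul]
  simp only [p_add_left, p_add_right, p_smul_left, p_smul_right, p_self, smul_zero]
  rw [p_swap e2 e1, p_swap e3 e1, p_swap e3 e2]
  have hg : g = a⁻¹ * (b * f - c * d) := by field_simp; linear_combination h
  subst hg
  match_scalars <;> (field_simp; try ring)

lemma decomp2 (e0 e1 e2 e3 : W) (a b c d f g : K) (h : a * g - b * f + c * d = 0) :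
    ∃ v w : W, a • p e0 e1 + b • p e0 e2 + c • p e0 e3 + d • p e1 e2
      + f • p e1 e3 + g • p e2 e3 = (p v w : ⋀[K]^2 W) := by
  by_cases ha : a = 0
  swap
  · exact decomp1 e0 e1 e2 e3 a b c d f g ha h
  by_cases hb : b = 0
  swap
  · obtain ⟨v, w, hh⟩ := decomp1 e0 e2 e1 e3 b a c (-d) g f hb (by linear_combination -h)
    refine ⟨v, w, ?_⟩
    rw [← hh, p_swap e2 e1]; module
  by_cases hc : c = 0
  swap
  · obtain ⟨v, w, hh⟩ := decomp1 e0 e3 e1 e2 c a b (-f) (-g) d hc (by linear_combination h)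
    refine ⟨v, w, ?_⟩
    rw [← hh, p_swap e3 e1, p_swap e3 e2]; module
  subst ha hb hc
  by_cases hd : d = 0
  swap
  · obtain ⟨v, w, hh⟩ := decomp1 e1 e2 e3 e0 d f 0 g 0 0 hd (by ring)
    refine ⟨v, w, ?_⟩
    rw [← hh]; module
  subst hd
  refine ⟨f • e1 + g • e2, e3, ?_⟩
  rw [p_add_left, p_smul_left, p_smul_left]; module

lemma p_change (a b e : W) (α β : K) (he : e = α • a + β • b) (h0 : e ≠ 0) :
    ∃ b', (p a b : ⋀[K]^2 W) = p e b' := by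
  subst he
  by_cases h : α = 0
  · by_cases h' : β = 0
    · simp [h, h'] at h0
    · refine ⟨-(β⁻¹ • a), ?_⟩
      rw [h, p_neg_right, p_smul_right, p_add_left, p_smul_left, p_smul_left, p_self, p_swap a b]
      match_scalars; field_simp
  · refine ⟨α⁻¹ • b, ?_⟩
    rw [p_smul_right, p_add_left, p_smul_left, p_smul_left, p_self]
    match_scalars; field_simp

/-- wedge nonzero gives no nontrivial relation -/
lemma comb_ne (a b : W) (h : (p a b : ⋀[K]^2 W) ≠ 0) (α β : K) (h0 : α • a + β • b = 0) :
    α = 0 ∧ β = 0 := by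
  constructor
  · have : (p (α • a + β • b) b : ⋀[K]^2 W) = 0 := by rw [h0, p_zero_left]
    rw [p_add_left, p_smul_left, p_smul_left, p_self] at this
    simpa [h] using this
  · have : (p a (α • a + β • b) : ⋀[K]^2 W) = 0 := by rw [h0, p_zero_right]
    rw [p_add_right, p_smul_right, p_smul_right, p_self] at this
    simpa [h] using this

lemma Q1 (D : W [⋀^Fin 4]→ₗ[K] K) (a b c d : W) : D ![a, b, c, d] = - D ![b, a, c, d] := by
  rw [← D.map_swap _ (show (0 : Fin 4) ≠ 1 by decide)]
  congr 1; ext i; fin_cases i <;> rfl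
lemma Q2 (D : W [⋀^Fin 4]→ₗ[K] K) (a b c d : W) : D ![a, b, c, d] = - D ![a, c, b, d] := by
  rw [← D.map_swap _ (show (1 : Fin 4) ≠ 2 by decide)]
  congr 1; ext i; fin_cases i <;> rfl
lemma Q3 (D : W [⋀^Fin 4]→ₗ[K] K) (a b c d : W) : D ![a, b, c, d] = - D ![a, b, d, c] := by
  rw [← D.map_swap _ (show (2 : Fin 4) ≠ 3 by decide)]
  congr 1; ext i; fin_cases i <;> rfl
lemma Z (D : W [⋀^Fin 4]→ₗ[K] K) (i j : Fin 4) (h : i ≠ j) (v : Fin 4 → W) (hv : v i = v j) :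
    D v = 0 := D.map_eq_zero_of_eq v hv h

/-- full table of B on a quadruple -/
lemma B_expand (D : W [⋀^Fin 4]→ₗ[K] K) (B : ⋀[K]^2 W →ₗ[K] ⋀[K]^2 W →ₗ[K] K)
    (hB : ∀ a b c d, B (p a b) (p c d) = D ![a, b, c, d]) (e0 e1 e2 e3 : W)
    (a b c d f g a' b' c' d' f' g' : K) :
    B (a • p e0 e1 + b • p e0 e2 + c • p e0 e3 + d • p e1 e2 + f • p e1 e3 + g • p e2 e3)
      (a' • p e0 e1 + b' • p e0 e2 + c' • p e0 e3 + d' • p e1 e2 + f' • p e1 e3 + g' • p e2 e3)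
      = (a * g' + g * a' - b * f' - f * b' + c * d' + d * c') * D ![e0, e1, e2, e3] := by
  have z (x y z : W) : D ![x, y, x, z] = 0 := Z D 0 2 (by decide) _ rfl
  have z1 (x y z : W) : D ![x, y, z, x] = 0 := Z D 0 3 (by decide) _ rfl
  have z2 (x y z : W) : D ![y, x, x, z] = 0 := Z D 1 2 (by decide) _ rfl
  have z3 (x y z : W) : D ![y, x, z, x] = 0 := Z D 1 3 (by decide) _ rfl
  simp only [map_add, map_smul, LinearMap.add_apply, LinearMap.smul_apply, hB, z, z1, z2, z3,
    smul_eq_mul]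
  have h1 : D ![e0, e2, e1, e3] = - D ![e0, e1, e2, e3] := Q2 ..
  have h2 : D ![e0, e3, e1, e2] = D ![e0, e1, e2, e3] := by
    rw [Q2, Q3 D e0 e1 e3 e2]; simp
  have h3 : D ![e1, e2, e0, e3] = D ![e0, e1, e2, e3] := by
    rw [Q2, Q1]; simp
  have h4 : D ![e1, e3, e0, e2] = - D ![e0, e1, e2, e3] := by
    rw [Q2, Q1, Q3]; simp
  have h5 : D ![e2, e3, e0, e1] = D ![e0, e1, e2, e3] := by
    rw [Q2, Q1, Q3, Q2 D e0 e2]; simp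
  rw [h1, h2, h3, h4, h5]; ring

lemma D_ne (hW : Module.finrank K W = 4) (D : W [⋀^Fin 4]→ₗ[K] K) (hD : D ≠ 0)
    (e : Fin 4 → W) (he : LinearIndependent K e) : D e ≠ 0 := by
  have := D.map_basis_ne_zero_iff (basisOfLinearIndependentOfCardEqFinrank he (by simp [hW]))
  simpa using this.2 hD

lemma span_of_li (hW : Module.finrank K W = 4) (e0 e1 e2 e3 : W)
    (he : LinearIndependent K ![e0, e1, e2, e3]) (v : W) :
    ∃ a b c d : K, v = a • e0 + b • e1 + c • e2 + d • e3 := by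
  have := (basisOfLinearIndependentOfCardEqFinrank he (by simp [hW])).span_eq
  rw [coe_basisOfLinearIndependentOfCardEqFinrank] at this
  simpa using span4 _ this.ge v


lemma ext4 (hW : Module.finrank K W = 4) (a b c : W) (h : LinearIndependent K ![a, b, c]) :
    ∃ d, LinearIndependent K ![a, b, c, d] := by
  obtain ⟨d, hd⟩ := exists_linearIndependent_snoc_of_lt_finrank h (by omega)
  exact ⟨d, by simpa using hd⟩

lemma ext3 (hW : Module.finrank K W = 4) (a b : W) (h : LinearIndependent K ![a, b]) :
    ∃ c, LinearIndependent K ![a, b, c] := by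
  obtain ⟨d, hd⟩ := exists_linearIndependent_snoc_of_lt_finrank h (by omega)
  exact ⟨d, by simpa using hd⟩

lemma li3 (a b c : W) : LinearIndependent K ![a, b, c] ↔
    ∀ x y z : K, x • a + y • b + z • c = 0 → x = 0 ∧ y = 0 ∧ z = 0 := by
  rw [Fintype.linearIndependent_iff]
  constructor
  · intro h x y z hh
    have := h ![x, y, z] (by simpa [Fin.sum_univ_three] using hh)
    exact ⟨this 0, this 1, this 2⟩
  · intro h g hg i
    have := h (g 0) (g 1) (g 2) (by simpa [Fin.sum_univ_three] using hg)
    fin_cases i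
    exacts [this.1, this.2.1, this.2.2]

lemma rel4 (a b c d : W) (h : ¬ LinearIndependent K ![a, b, c, d]) :
    ∃ x y z t : K, x • a + y • b + z • c + t • d = 0 ∧ ¬ (x = 0 ∧ y = 0 ∧ z = 0 ∧ t = 0) := by
  rw [Fintype.linearIndependent_iff] at h
  push Not at h
  obtain ⟨g, hg, i, hi⟩ := h
  refine ⟨g 0, g 1, g 2, g 3, by simpa [Fin.sum_univ_four] using hg, ?_⟩
  rintro ⟨h0, h1, h2, h3⟩
  fin_cases i <;> contradiction

lemma finrank_span3 {V : Type*} [AddCommGroup V] [Module K V] (x y z : V) :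
    Module.finrank K (Submodule.span K {x, y, z}) ≤ 3 := by
  classical
  have := finrank_span_finset_le_card (R := K) ({x, y, z} : Finset V)
  have h2 : ({x, y, z} : Finset V).card ≤ 3 := Finset.card_le_three
  rw [Set.finrank, Finset.coe_insert, Finset.coe_insert, Finset.coe_singleton] at this
  omega

lemma exists_three {V : Type*} [AddCommGroup V] [Module K V] (U : Submodule K V)
    (hU : Module.finrank K U = 3) : ∃ u0 ∈ U, ∃ u1 ∈ U, ∃ u2 ∈ U,
    LinearIndependent K ![u0, u1, u2] := by
  have : FiniteDimensional K U := FiniteDimensional.of_finrank_eq_succ hU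
  let u := Module.finBasisOfFinrankEq K U hU
  refine ⟨u 0, (u 0).2, u 1, (u 1).2, u 2, (u 2).2, ?_⟩
  have h := u.linearIndependent.map' U.subtype (by simp)
  have e : U.subtype ∘ u = ![(u 0 : V), (u 1 : V), (u 2 : V)] := by
    ext i; fin_cases i <;> rfl
  rwa [e] at h

section
variable [FiniteDimensional K W]

lemma eq_F (U : Submodule K (⋀[K]^2 W)) (hU : Module.finrank K U = 3) (e b c : W)
    (h : ∀ u ∈ U, ∃ x y z : K, u = x • p e b + y • p e c + z • p b c) :
    U = Submodule.span K {x : ⋀[K]^2 W | ∃ v ∈ Submodule.span K {e, b, c},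
      ∃ w ∈ Submodule.span K {e, b, c}, x = p v w} := by
  apply Submodule.eq_of_le_of_finrank_le
  · intro u hu
    obtain ⟨x, y, z, rfl⟩ := h u hu
    have he : e ∈ Submodule.span K {e, b, c} := Submodule.subset_span (by simp)
    have hb : b ∈ Submodule.span K {e, b, c} := Submodule.subset_span (by simp)
    have hc : c ∈ Submodule.span K {e, b, c} := Submodule.subset_span (by simp)
    refine add_mem (add_mem ?_ ?_) ?_ <;> refine Submodule.smul_mem _ _ (Submodule.subset_span ?_)
    exacts [⟨e, he, b, hb, rfl⟩, ⟨e, he, c, hc, rfl⟩, ⟨b, hb, c, hc, rfl⟩]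
  · rw [hU]
    refine le_trans (Submodule.finrank_mono ?_) (finrank_span3 (K := K) (p e b) (p e c) (p b c))
    rw [Submodule.span_le]
    rintro _ ⟨v, hv, w, hw, rfl⟩
    obtain ⟨x, y, z, rfl⟩ := Submodule.mem_span_triple.1 hv
    obtain ⟨x', y', z', rfl⟩ := Submodule.mem_span_triple.1 hw
    rw [SetLike.mem_coe, Submodule.mem_span_triple]
    refine ⟨x * y' - y * x', x * z' - z * x', y * z' - z * y', ?_⟩
    simp only [p_add_left, p_add_right, p_smul_left, p_smul_right, p_self, smul_zero]
    rw [p_swap b e, p_swap c e, p_swap c b]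
    module

lemma eq_N (U : Submodule K (⋀[K]^2 W)) (hU : Module.finrank K U = 3) (e b c d : W)
    (hs : ∀ v : W, ∃ x y z t : K, v = x • e + y • b + z • c + t • d)
    (h : ∀ u ∈ U, ∃ x y z : K, u = x • p e b + y • p e c + z • p e d) :
    U = Submodule.span K {x : ⋀[K]^2 W | ∃ v ∈ Submodule.span K {e},
      ∃ w, x = p v w} := by
  apply Submodule.eq_of_le_of_finrank_le
  · intro u hu
    obtain ⟨x, y, z, rfl⟩ := h u hu
    have he : e ∈ Submodule.span K {e} := Submodule.subset_span (by simp)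
    refine add_mem (add_mem ?_ ?_) ?_ <;> refine Submodule.smul_mem _ _ (Submodule.subset_span ?_)
    exacts [⟨e, he, b, rfl⟩, ⟨e, he, c, rfl⟩, ⟨e, he, d, rfl⟩]
  · rw [hU]
    refine le_trans (Submodule.finrank_mono ?_) (finrank_span3 (K := K) (p e b) (p e c) (p e d))
    rw [Submodule.span_le]
    rintro _ ⟨v, hv, w, rfl⟩
    obtain ⟨r, rfl⟩ := Submodule.mem_span_singleton.1 hv
    obtain ⟨x', y', z', t', rfl⟩ := hs w
    rw [SetLike.mem_coe, Submodule.mem_span_triple]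
    refine ⟨r * y', r * z', r * t', ?_⟩
    simp only [p_add_right, p_smul_left, p_smul_right, p_self, smul_zero]
    module

lemma decomposable (hK2 : (2 : K) ≠ 0) (hW : Module.finrank K W = 4)
    (D : W [⋀^Fin 4]→ₗ[K] K) (hD : D ≠ 0) (B : ⋀[K]^2 W →ₗ[K] ⋀[K]^2 W →ₗ[K] K)
    (hB : ∀ a b c d, B (p a b) (p c d) = D ![a, b, c, d]) (u : ⋀[K]^2 W) (hu : B u u = 0) :
    ∃ v w, u = p v w := by
  let e := Module.finBasisOfFinrankEq K W hW
  have hli : LinearIndependent K ![e 0, e 1, e 2, e 3] := by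
    convert e.linearIndependent using 1
    ext i; fin_cases i <;> rfl
  obtain ⟨a, b, c, d, f, g, rfl⟩ := expand _ _ _ _ (span_of_li hW _ _ _ _ hli) u
  rw [B_expand D B hB] at hu
  have h0 := D_ne hW D hD _ hli
  obtain ⟨v, w, h⟩ := decomp2 (e 0) (e 1) (e 2) (e 3) a b c d f g (by
    have := (mul_eq_zero.1 hu).resolve_right h0
    apply (mul_eq_zero.1 (show 2 * (a * g - b * f + c * d) = 0 by linear_combination this)
      ).resolve_left hK2)
  exact ⟨v, w, h⟩

lemma forward (hK2 : (2 : K) ≠ 0) (hW : Module.finrank K W = 4)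
    (D : W [⋀^Fin 4]→ₗ[K] K) (hD : D ≠ 0) (B : ⋀[K]^2 W →ₗ[K] ⋀[K]^2 W →ₗ[K] K)
    (hB : ∀ a b c d, B (p a b) (p c d) = D ![a, b, c, d])
    (U : Submodule K (⋀[K]^2 W)) (hU : Module.finrank K U = 3)
    (hiso : ∀ u ∈ U, ∀ u' ∈ U, B u u' = 0) :
    (∃ F : Submodule K W, Module.finrank K F = 3 ∧
        U = Submodule.span K {x : ⋀[K]^2 W | ∃ v ∈ F, ∃ w ∈ F, x = p v w}) ∨
    (∃ N : Submodule K W, Module.finrank K N = 1 ∧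
        U = Submodule.span K {x : ⋀[K]^2 W | ∃ v ∈ N, ∃ w : W, x = p v w}) := by
  obtain ⟨u0, hu0, u1, hu1, u2, hu2, hli⟩ := exists_three U hU
  have hli' : ∀ x y z : K, x • u0 + y • u1 + z • u2 = 0 → x = 0 ∧ y = 0 ∧ z = 0 := (li3 _ _ _).1 hli
  have h00 : u0 ≠ 0 := by
    rintro rfl
    simpa using (hli' 1 0 0 (by simp)).1
  have h10 : u1 ≠ 0 := by
    rintro rfl
    simpa using (hli' 0 1 0 (by simp)).2.1
  -- common vector
  obtain ⟨e, b, c, he, rfl, rfl⟩ : ∃ e b c, e ≠ 0 ∧ u0 = p e b ∧ u1 = p e c := by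
    obtain ⟨a, b, rfl⟩ := decomposable hK2 hW D hD B hB u0 (hiso _ hu0 _ hu0)
    obtain ⟨c, d, rfl⟩ := decomposable hK2 hW D hD B hB u1 (hiso _ hu1 _ hu1)
    have h := hiso _ hu0 _ hu1
    rw [hB] at h
    obtain ⟨x, y, z, t, hr, hn⟩ := rel4 (K := K) a b c d (fun hl => D_ne hW D hD _ hl h)
    have hne : x • a + y • b ≠ 0 := by
      intro h0
      have h1 := comb_ne a b h00 x y h0
      rw [h0, zero_add] at hr
      have h2 := comb_ne c d h10 z t hr
      exact hn ⟨h1.1, h1.2, h2.1, h2.2⟩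
    obtain ⟨b', hb'⟩ := p_change (K := K) a b (x • a + y • b) x y rfl hne
    obtain ⟨d', hd'⟩ := p_change (K := K) c d (x • a + y • b) (-z) (-t) (by
      rw [add_assoc] at hr
      rw [eq_neg_of_add_eq_zero_left hr]; module) hne
    exact ⟨_, _, _, hne, hb', hd'⟩
  have hebc : LinearIndependent K ![e, b, c] := by
    rw [li3]
    intro x y z h
    have h1 : (p e (x • e + y • b + z • c) : ⋀[K]^2 W) = 0 := by rw [h, p_zero_right]
    rw [p_add_right, p_add_right, p_smul_right, p_smul_right, p_smul_right, p_self] at h1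
    obtain ⟨hy, hz, -⟩ := hli' y z 0 (by rw [← h1]; module)
    subst hy hz
    refine ⟨?_, rfl, rfl⟩
    simpa [he] using h
  obtain ⟨d, hd⟩ := ext4 hW e b c hebc
  have hspan := span_of_li hW _ _ _ _ hd
  have hne := D_ne hW D hD _ hd
  have key : ∀ u ∈ U, ∃ x y z t : K, u = x • p e b + y • p e c + z • p e d + t • p b c := by
    intro u hu
    obtain ⟨a, b', c', d', f, g, rfl⟩ := expand _ _ _ _ hspan u
    have h1 := hiso _ hu _ hu0
    have h2 := hiso _ hu _ hu1
    have e1 : (p e b : ⋀[K]^2 W) = (1 : K) • p e b + (0 : K) • p e c + (0 : K) • p e d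
      + (0 : K) • p b c + (0 : K) • p b d + (0 : K) • p c d := by module
    have e2 : (p e c : ⋀[K]^2 W) = (0 : K) • p e b + (1 : K) • p e c + (0 : K) • p e d
      + (0 : K) • p b c + (0 : K) • p b d + (0 : K) • p c d := by module
    have h1' := (congrArg _ e1).symm.trans h1
    have h2' := (congrArg _ e2).symm.trans h2
    rw [B_expand D B hB] at h1' h2'
    have hg : g = 0 := by simpa [hne] using h1'
    have hf : f = 0 := by simpa [hne] using h2'
    exact ⟨a, b', c', d', by rw [hg, hf]; module⟩
  have pair : ∀ x y z t x' y' z' t' : K,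
      x • p e b + y • p e c + z • p e d + t • p b c ∈ U →
      x' • p e b + y' • p e c + z' • p e d + t' • p b c ∈ U → z * t' + t * z' = 0 := by
    intro x y z t x' y' z' t' h h'
    have h1 := hiso _ h _ h'
    have e1 (x y z t : K) : x • p e b + y • p e c + z • p e d + t • p b c
      = x • p e b + y • p e c + z • p e d + t • p b c + (0 : K) • p b d
        + (0 : K) • (p c d : ⋀[K]^2 W) := by
      module
    rw [e1 x, e1 x', B_expand D B hB] at h1
    linear_combination (mul_eq_zero.1 h1).resolve_right hne
  obtain ⟨x, y, z, t, rfl⟩ := key u2 hu2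
  have hzt : z * t = 0 := by
    have := pair _ _ _ _ _ _ _ _ hu2 hu2
    exact (mul_eq_zero.1 (show 2 * (z * t) = 0 by linear_combination this)).resolve_left hK2
  by_cases hz : z = 0
  · subst hz
    have ht : t ≠ 0 := by
      rintro rfl
      have := (hli' x y (-1) (by module)).2.2
      simp at this
    left
    refine ⟨Submodule.span K {e, b, c}, ?_, ?_⟩
    · have := finrank_span_eq_card hebc
      rw [show Set.range ![e, b, c] = {e, b, c} by
        ext q; simp [eq_comm]; tauto] at this
      simpa using this
    · apply eq_F U hU
      intro u hu
      obtain ⟨x', y', z', t', rfl⟩ := key u hu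
      have := pair _ _ _ _ _ _ _ _ hu2 hu
      have hz' : z' = 0 := by simpa [ht] using this
      exact ⟨x', y', t', by rw [hz']; module⟩
  · have ht : t = 0 := by simpa [hz] using hzt
    subst ht
    right
    refine ⟨Submodule.span K {e}, finrank_span_singleton he, ?_⟩
    apply eq_N U hU e b c d hspan
    intro u hu
    obtain ⟨x', y', z', t', rfl⟩ := key u hu
    have := pair _ _ _ _ _ _ _ _ hu2 hu
    have hz' : t' = 0 := by simpa [hz] using this
    exact ⟨x', y', z', by rw [hz']; module⟩

lemma iso_of_gen (B : ⋀[K]^2 W →ₗ[K] ⋀[K]^2 W →ₗ[K] K) (S T : Set (⋀[K]^2 W))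
    (h : ∀ x ∈ S, ∀ y ∈ T, B x y = 0) :
    ∀ x ∈ Submodule.span K S, ∀ y ∈ Submodule.span K T, B x y = 0 := by
  intro x hx y hy
  induction hx using Submodule.span_induction with
  | mem x hx =>
    induction hy using Submodule.span_induction with
    | mem y hy => exact h x hx y hy
    | zero => simp
    | add a b _ _ ha hb => simp [ha, hb]
    | smul r a _ ha => simp [ha]
  | zero => simp
  | add a b _ _ ha hb => simp [ha, hb]
  | smul r a _ ha => simp [ha]

lemma isoF (D : W [⋀^Fin 4]→ₗ[K] K) (B : ⋀[K]^2 W →ₗ[K] ⋀[K]^2 W →ₗ[K] K)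
    (hB : ∀ a b c d, B (p a b) (p c d) = D ![a, b, c, d])
    (F : Submodule K W) (hF : Module.finrank K F = 3) :
    ∀ x ∈ Submodule.span K {x : ⋀[K]^2 W | ∃ v ∈ F, ∃ w ∈ F, x = p v w},
    ∀ y ∈ Submodule.span K {x : ⋀[K]^2 W | ∃ v ∈ F, ∃ w ∈ F, x = p v w}, B x y = 0 := by
  apply iso_of_gen
  rintro _ ⟨a, ha, b, hb, rfl⟩ _ ⟨c, hc, d, hd, rfl⟩
  rw [hB]
  apply D.map_linearDependent
  intro h
  have h' : LinearIndependent K (![⟨a, ha⟩, ⟨b, hb⟩, ⟨c, hc⟩, ⟨d, hd⟩] : Fin 4 → F) := by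
    apply LinearIndependent.of_comp F.subtype
    have e : F.subtype ∘ (![⟨a, ha⟩, ⟨b, hb⟩, ⟨c, hc⟩, ⟨d, hd⟩] : Fin 4 → F) = ![a, b, c, d] := by
      ext i; fin_cases i <;> rfl
    rwa [e]
  have := h'.fintype_card_le_finrank
  simp [hF] at this

lemma isoN (D : W [⋀^Fin 4]→ₗ[K] K) (B : ⋀[K]^2 W →ₗ[K] ⋀[K]^2 W →ₗ[K] K)
    (hB : ∀ a b c d, B (p a b) (p c d) = D ![a, b, c, d])
    (N : Submodule K W) (hN : Module.finrank K N = 1) :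
    ∀ x ∈ Submodule.span K {x : ⋀[K]^2 W | ∃ v ∈ N, ∃ w, x = p v w},
    ∀ y ∈ Submodule.span K {x : ⋀[K]^2 W | ∃ v ∈ N, ∃ w, x = p v w}, B x y = 0 := by
  apply iso_of_gen
  rintro _ ⟨a, ha, b, rfl⟩ _ ⟨c, hc, d, rfl⟩
  obtain ⟨n, -, hn⟩ := finrank_eq_one_iff'.1 hN
  obtain ⟨r, hr⟩ := hn ⟨a, ha⟩
  obtain ⟨s, hs⟩ := hn ⟨c, hc⟩
  have hr : r • (n : W) = a := congrArg Subtype.val hr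
  have hs : s • (n : W) = c := congrArg Subtype.val hs
  subst hr hs
  rw [p_smul_left, p_smul_left, map_smul, map_smul, LinearMap.smul_apply, hB,
    Z D 0 2 (by decide) _ rfl]
  simp

lemma uniqN (hW : Module.finrank K W = 4) (D : W [⋀^Fin 4]→ₗ[K] K) (hD : D ≠ 0)
    (N N' : Submodule K W) (hN : Module.finrank K N = 1) (hN' : Module.finrank K N' = 1)
    (h : ∀ v ∈ N, ∀ v' ∈ N', ∀ w w', D ![v, w, v', w'] = 0) : N = N' := by
  obtain ⟨⟨n, hn⟩, hn0, -⟩ := finrank_eq_one_iff'.1 hN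
  have hn0 : n ≠ 0 := fun h => hn0 (Subtype.ext h)
  symm
  apply Submodule.eq_of_le_of_finrank_eq _ (by rw [hN, hN'])
  intro v' hv'
  by_contra hc
  have hli : LinearIndependent K ![n, v'] := by
    rw [LinearIndependent.pair_iff' hn0]
    rintro a rfl
    exact hc (N.smul_mem _ hn)
  obtain ⟨w, hw⟩ := ext3 hW _ _ hli
  obtain ⟨w', hw'⟩ := ext4 hW _ _ _ hw
  have := D_ne hW D hD _ hw'
  rw [Q2, h n hn v' hv', neg_zero] at this
  exact this rfl

lemma uniqF (hW : Module.finrank K W = 4) (D : W [⋀^Fin 4]→ₗ[K] K) (hD : D ≠ 0)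
    (F F' : Submodule K W) (hF : Module.finrank K F = 3) (hF' : Module.finrank K F' = 3)
    (h : ∀ v ∈ F, ∀ w ∈ F, ∀ v' ∈ F', ∀ w' ∈ F', D ![v, w, v', w'] = 0) : F = F' := by
  symm
  apply Submodule.eq_of_le_of_finrank_eq _ (by rw [hF, hF'])
  intro f' hf'
  by_contra hc
  obtain ⟨f0, h0, f1, h1, f2, h2, hb⟩ := exists_three F hF
  have hli : LinearIndependent K ![f', f0, f1, f2] := by
    refine linearIndependent_finCons.2 ⟨hb, fun hm => hc ?_⟩
    refine (Submodule.span_le.2 ?_) hm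
    rintro _ ⟨i, rfl⟩
    fin_cases i
    exacts [h0, h1, h2]
  have hne := D_ne hW D hD _ hli
  have hle : F' ≤ Submodule.span K {f'} := by
    intro w hw
    obtain ⟨x, y, z, t, rfl⟩ := span_of_li hW _ _ _ _ hli w
    have e (u v : W) : D ![u, v, f', x • f' + y • f0 + z • f1 + t • f2] =
        y * D ![u, v, f', f0] + z * D ![u, v, f', f1] + t * D ![u, v, f', f2] := by
      have hadd (a b : W) : D ![u, v, f', a + b] = D ![u, v, f', a] + D ![u, v, f', b] := by
        have := D.map_update_add ![u, v, f', 0] 3 a b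
        have hup (q : W) : Function.update ![u, v, f', 0] 3 q = ![u, v, f', q] := by
          ext i; fin_cases i <;> rfl
        simpa only [hup] using this
      have hsm (r : K) (a : W) : D ![u, v, f', r • a] = r * D ![u, v, f', a] := by
        have := D.map_update_smul ![u, v, f', 0] 3 r a
        have hup (q : W) : Function.update ![u, v, f', 0] 3 q = ![u, v, f', q] := by
          ext i; fin_cases i <;> rfl
        simpa only [hup, smul_eq_mul] using this
      rw [hadd, hadd, hadd, hsm, hsm, hsm, hsm, Z D 2 3 (by decide) _ rfl]; ring
    have k1 := h _ h1 _ h2 _ hf' _ hw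
    have k2 := h _ h0 _ h2 _ hf' _ hw
    have k3 := h _ h0 _ h1 _ hf' _ hw
    rw [e] at k1 k2 k3
    rw [Z D 0 3 (by decide) ![f1, f2, f', f1] rfl, Z D 1 3 (by decide) ![f1, f2, f', f2] rfl] at k1
    rw [Z D 0 3 (by decide) ![f0, f2, f', f0] rfl, Z D 1 3 (by decide) ![f0, f2, f', f2] rfl] at k2
    rw [Z D 0 3 (by decide) ![f0, f1, f', f0] rfl, Z D 1 3 (by decide) ![f0, f1, f', f1] rfl] at k3
    have n1 : D ![f1, f2, f', f0] ≠ 0 := by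
      rw [Q2, Q1, Q3, Q2 D f' f1 f0] <;> simpa using hne
    have n2 : D ![f0, f2, f', f1] ≠ 0 := by
      rw [Q2, Q1, Q3] <;> simpa using hne
    have n3 : D ![f0, f1, f', f2] ≠ 0 := by
      rw [Q2, Q1] <;> simpa using hne
    have hy : y = 0 := by simpa [n1] using k1
    have hz : z = 0 := by simpa [n2] using k2
    have ht : t = 0 := by simpa [n3] using k3
    subst hy hz ht
    simpa using Submodule.smul_mem _ x (Submodule.mem_span_singleton_self f')
  have h3 := Submodule.finrank_mono hle
  have h4 : Module.finrank K (Submodule.span K {f'}) ≤ 1 := by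
    have := finrank_span_finset_le_card (R := K) ({f'} : Finset W)
    rwa [Set.finrank, Finset.coe_singleton, Finset.card_singleton] at this
  omega

end
end S11

/-- A 3-dimensional subspace `U ⊆ ⋀²W` is totally isotropic for `B` iff either
`U = ⋀²F = span{v ∧ w : v, w ∈ F}` for a 3-dimensional `F ⊆ W`, or
`U = span{v ∧ w : v ∈ N, w ∈ W}` for a 1-dimensional `N ⊆ W`; moreover `F` (resp. `N`) is
uniquely determined by `U`. -/
theorem stmt_11 (K : Type*) [Field K] (hK2 : (2 : K) ≠ 0)
    (W : Type*) [AddCommGroup W] [Module K W] [FiniteDimensional K W]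
    (hW : Module.finrank K W = 4)
    (wedge : ⋀[K]^2 W →ₗ[K] ⋀[K]^2 W →ₗ[K] ⋀[K]^4 W)
    (hwedge : ∀ x y : ⋀[K]^2 W,
      (wedge x y : ExteriorAlgebra K W) = (x : ExteriorAlgebra K W) * (y : ExteriorAlgebra K W))
    (θ : ⋀[K]^4 W →ₗ[K] K) (hθ : θ ≠ 0)
    (B : ⋀[K]^2 W →ₗ[K] ⋀[K]^2 W →ₗ[K] K)
    (hB : ∀ x y : ⋀[K]^2 W, B x y = θ (wedge x y))
    (U : Submodule K (⋀[K]^2 W)) (hU : Module.finrank K U = 3) :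
    ((∀ u ∈ U, ∀ u' ∈ U, B u u' = 0) ↔
      ((∃ F : Submodule K W, Module.finrank K F = 3 ∧
          U = Submodule.span K {x : ⋀[K]^2 W | ∃ v ∈ F, ∃ w ∈ F,
            (x : ExteriorAlgebra K W) = ExteriorAlgebra.ι K v * ExteriorAlgebra.ι K w}) ∨
       (∃ N : Submodule K W, Module.finrank K N = 1 ∧
          U = Submodule.span K {x : ⋀[K]^2 W | ∃ v ∈ N, ∃ w : W,
            (x : ExteriorAlgebra K W) = ExteriorAlgebra.ι K v * ExteriorAlgebra.ι K w}))) ∧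
    (∀ F F' : Submodule K W,
      (Module.finrank K F = 3 ∧
        U = Submodule.span K {x : ⋀[K]^2 W | ∃ v ∈ F, ∃ w ∈ F,
          (x : ExteriorAlgebra K W) = ExteriorAlgebra.ι K v * ExteriorAlgebra.ι K w}) →
      (Module.finrank K F' = 3 ∧
        U = Submodule.span K {x : ⋀[K]^2 W | ∃ v ∈ F', ∃ w ∈ F',
          (x : ExteriorAlgebra K W) = ExteriorAlgebra.ι K v * ExteriorAlgebra.ι K w}) →
      F = F') ∧
    (∀ N N' : Submodule K W,
      (Module.finrank K N = 1 ∧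
        U = Submodule.span K {x : ⋀[K]^2 W | ∃ v ∈ N, ∃ w : W,
          (x : ExteriorAlgebra K W) = ExteriorAlgebra.ι K v * ExteriorAlgebra.ι K w}) →
      (Module.finrank K N' = 1 ∧
        U = Submodule.span K {x : ⋀[K]^2 W | ∃ v ∈ N', ∃ w : W,
          (x : ExteriorAlgebra K W) = ExteriorAlgebra.ι K v * ExteriorAlgebra.ι K w}) →
      N = N') := by
    classical
  simp only [S11.eq_p_iff]
  let D : W [⋀^Fin 4]→ₗ[K] K := θ.compAlternatingMap (exteriorPower.ιMulti K 4)
  have hD : D ≠ 0 := by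
    intro h
    apply hθ
    apply exteriorPower.linearMap_ext
    rw [show θ.compAlternatingMap (exteriorPower.ιMulti K 4) = 0 from h]
    ext; simp
  have hBp : ∀ a b c d, B (S11.p a b) (S11.p c d) = D ![a, b, c, d] := by
    intro a b c d
    rw [hB]
    change _ = θ (exteriorPower.ιMulti K 4 ![a, b, c, d])
    congr 1
    apply Subtype.ext
    rw [hwedge, S11.p_coe, S11.p_coe]
    simp [ExteriorAlgebra.ιMulti_apply, mul_assoc]
  refine ⟨⟨S11.forward hK2 hW D hD B hBp U hU, ?_⟩, ?_, ?_⟩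
  · rintro (⟨F, hF, rfl⟩ | ⟨N, hN, rfl⟩)
    · exact S11.isoF D B hBp F hF
    · exact S11.isoN D B hBp N hN
  · rintro F F' ⟨hF, h1⟩ ⟨hF', h2⟩
    apply S11.uniqF hW D hD F F' hF hF'
    intro v hv w hw v' hv' w' hw'
    rw [← hBp]
    apply S11.isoF D B hBp F hF
    · exact Submodule.subset_span ⟨v, hv, w, hw, rfl⟩
    · rw [← h1, h2]
      exact Submodule.subset_span ⟨v', hv', w', hw', rfl⟩
  · rintro N N' ⟨hN, h1⟩ ⟨hN', h2⟩
    apply S11.uniqN hW D hD N N' hN hN'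
    intro v hv v' hv' w w'
    rw [← hBp]
    apply S11.isoN D B hBp N hN
    · exact Submodule.subset_span ⟨v, hv, w, rfl⟩
    · rw [← h1, h2]
      exact Submodule.subset_span ⟨v', hv', w', rfl⟩
end

section
/- A 2-dimensional subspace U ⊆ ⋀²W is totally isotropic for B if and only if there exist subspaces N ⊆ H ⊆ W with dim N = 1 and dim H = 3 such that U = span{v ∧ w : v ∈ N, w ∈ H}. -/
def Sp4 (K : Type*) [Field K] {W : Type*} [AddCommGroup W] [Module K W] (e0 e1 e2 e3 : W) : Prop :=
  ∀ w : W, ∃ a b c d : K, w = a • e0 + b • e1 + c • e2 + d • e3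

theorem exists_pairing (K : Type*) [Field K] (W : Type*) [AddCommGroup W] [Module K W] :
    ∃ p : W →ₗ[K] W →ₗ[K] ⋀[K]^2 W, ∀ v w, p v w = exteriorPower.ιMulti K 2 ![v, w] := by
  refine ⟨LinearMap.mk₂ K (fun v w => exteriorPower.ιMulti K 2 ![v, w]) ?_ ?_ ?_ ?_, ?_⟩
  · intro a b c
    ext
    simp [ExteriorAlgebra.ιMulti_apply, add_mul]
  · intro a b c
    ext
    simp [ExteriorAlgebra.ιMulti_apply]
  · intro a b c
    ext
    simp [ExteriorAlgebra.ιMulti_apply, mul_add]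
  · intro a b c
    ext
    simp [ExteriorAlgebra.ιMulti_apply]
  · intro v w
    rfl

theorem expand6 {K : Type*} [Field K] {W : Type*} [AddCommGroup W] [Module K W]
    (p : W →ₗ[K] W →ₗ[K] ⋀[K]^2 W) (hp : ∀ v w, p v w = exteriorPower.ιMulti K 2 ![v, w])
    (palt : ∀ v, p v v = 0) (panti : ∀ v w, p v w = - p w v)
    {e0 e1 e2 e3 : W} (hs : Sp4 K e0 e1 e2 e3) (x : ⋀[K]^2 W) :
    ∃ a b c d e f : K, x = a • p e0 e1 + b • p e0 e2 + c • p e0 e3 + d • p e1 e2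
      + e • p e1 e3 + f • p e2 e3 := by
  have hx : x ∈ Submodule.span K (Set.range (exteriorPower.ιMulti K 2 (M := W))) := by
    rw [exteriorPower.ιMulti_span]; trivial
  induction hx using Submodule.span_induction with
  | mem x h =>
    obtain ⟨m, rfl⟩ := h
    have : m = ![m 0, m 1] := by ext i; fin_cases i <;> rfl
    rw [this, ← hp]
    obtain ⟨a, b, c, d, h0⟩ := hs (m 0)
    obtain ⟨a', b', c', d', h1⟩ := hs (m 1)
    rw [h0, h1]
    refine ⟨a * b' - b * a', a * c' - c * a', a * d' - d * a', b * c' - c * b',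
      b * d' - d * b', c * d' - d * c', ?_⟩
    simp only [map_add, map_smul, LinearMap.add_apply, LinearMap.smul_apply, palt]
    rw [panti e1 e0, panti e2 e0, panti e3 e0, panti e2 e1, panti e3 e1, panti e3 e2]
    module
  | zero => exact ⟨0, 0, 0, 0, 0, 0, by simp⟩
  | add x y _ _ hx hy =>
    obtain ⟨a, b, c, d, e, f, rfl⟩ := hx
    obtain ⟨a', b', c', d', e', f', rfl⟩ := hy
    exact ⟨a + a', b + b', c + c', d + d', e + e', f + f', by module⟩
  | smul r x _ hx =>
    obtain ⟨a, b, c, d, e, f, rfl⟩ := hx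
    exact ⟨r * a, r * b, r * c, r * d, r * e, r * f, by module⟩

theorem decomp1 {K : Type*} [Field K] {W V : Type*} [AddCommGroup W] [Module K W]
    [AddCommGroup V] [Module K V]
    (p : W →ₗ[K] W →ₗ[K] V)
    (palt : ∀ v, p v v = 0) (panti : ∀ v w, p v w = - p w v)
    {e0 e1 e2 e3 : W} (hs : Sp4 K e0 e1 e2 e3) (x : V) (a b c d e f : K)
    (hx : x = a • p e0 e1 + b • p e0 e2 + c • p e0 e3 + d • p e1 e2
      + e • p e1 e3 + f • p e2 e3) (hpl : a * f - b * e + c * d = 0) (ha : a ≠ 0) :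
    ∃ v w y z, Sp4 K v w y z ∧ x = p v w := by
  refine ⟨e0 - (d / a) • e2 - (e / a) • e3, a • e1 + b • e2 + c • e3, e2, e3, ?_, ?_⟩
  · intro w
    obtain ⟨r, s, t, u, rfl⟩ := hs w
    refine ⟨r, s / a, t + r * (d / a) - s / a * b, u + r * (e / a) - s / a * c, ?_⟩
    match_scalars <;> field_simp <;> ring
  · rw [hx]
    have hf : f = (b * e - c * d) / a := by
      field_simp; linear_combination hpl
    subst hf
    simp only [map_add, map_sub, map_smul, LinearMap.add_apply, LinearMap.sub_apply,
      LinearMap.smul_apply, palt]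
    rw [panti e2 e1, panti e3 e1, panti e3 e2]
    match_scalars <;> field_simp <;> ring

theorem decomp {K : Type*} [Field K] {W V : Type*} [AddCommGroup W] [Module K W]
    [AddCommGroup V] [Module K V]
    (p : W →ₗ[K] W →ₗ[K] V)
    (palt : ∀ v, p v v = 0) (panti : ∀ v w, p v w = - p w v)
    {e0 e1 e2 e3 : W} (hs : Sp4 K e0 e1 e2 e3) (x : V) (a b c d e f : K)
    (hx : x = a • p e0 e1 + b • p e0 e2 + c • p e0 e3 + d • p e1 e2
      + e • p e1 e3 + f • p e2 e3) (hpl : a * f - b * e + c * d = 0) (hx0 : x ≠ 0) :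
    ∃ v w y z, Sp4 K v w y z ∧ x = p v w := by
  by_cases ha : a ≠ 0
  · exact decomp1 p palt panti hs x a b c d e f hx hpl ha
  by_cases hb : b ≠ 0
  · -- order 0 2 1 3
    refine decomp1 p palt panti (e0 := e0) (e1 := e2) (e2 := e1) (e3 := e3) ?_ x
      b a c (-d) f e ?_ (by linear_combination -hpl) hb
    · intro w
      obtain ⟨r, s, t, u, rfl⟩ := hs w
      exact ⟨r, t, s, u, by module⟩
    · rw [hx, panti e2 e1]; module
  by_cases hc : c ≠ 0
  · -- order 0 3 1 2
    refine decomp1 p palt panti (e0 := e0) (e1 := e3) (e2 := e1) (e3 := e2) ?_ x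
      c a b (-e) (-f) d ?_ (by linear_combination hpl) hc
    · intro w
      obtain ⟨r, s, t, u, rfl⟩ := hs w
      exact ⟨r, u, s, t, by module⟩
    · rw [hx, panti e3 e1, panti e3 e2]; module
  by_cases hd : d ≠ 0
  · -- order 1 2 0 3
    refine decomp1 p palt panti (e0 := e1) (e1 := e2) (e2 := e0) (e3 := e3) ?_ x
      d (-a) e (-b) f c ?_ (by linear_combination hpl) hd
    · intro w
      obtain ⟨r, s, t, u, rfl⟩ := hs w
      exact ⟨s, t, r, u, by module⟩
    · rw [hx, panti e1 e0, panti e2 e0]; module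
  by_cases he : e ≠ 0
  · -- order 1 3 0 2
    refine decomp1 p palt panti (e0 := e1) (e1 := e3) (e2 := e0) (e3 := e2) ?_ x
      e (-a) d (-c) (-f) b ?_ (by linear_combination -hpl) he
    · intro w
      obtain ⟨r, s, t, u, rfl⟩ := hs w
      exact ⟨s, u, r, t, by module⟩
    · rw [hx, panti e1 e0, panti e3 e0, panti e3 e2]; module
  by_cases hf : f ≠ 0
  · -- order 2 3 0 1
    refine decomp1 p palt panti (e0 := e2) (e1 := e3) (e2 := e0) (e3 := e1) ?_ x
      f (-b) (-d) (-c) (-e) a ?_ (by linear_combination hpl) hf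
    · intro w
      obtain ⟨r, s, t, u, rfl⟩ := hs w
      exact ⟨t, u, r, s, by module⟩
    · rw [hx, panti e2 e0, panti e2 e1, panti e3 e0, panti e3 e1]; module
  · push Not at ha hb hc hd he hf
    exact absurd (by rw [hx, ha, hb, hc, hd, he, hf]; simp) hx0

/-- values of the form -/
theorem Bxy {K : Type*} [Field K] {W V : Type*} [AddCommGroup W] [Module K W]
    [AddCommGroup V] [Module K V]
    (p : W →ₗ[K] W →ₗ[K] V) (B : V →ₗ[K] V →ₗ[K] K)
    (panti : ∀ v w, p v w = - p w v)
    (h1 : ∀ a b c, B (p a b) (p a c) = 0)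
    (e0 e1 e2 e3 : W) (a b c d e f a' b' c' d' e' f' : K) :
    B (a • p e0 e1 + b • p e0 e2 + c • p e0 e3 + d • p e1 e2 + e • p e1 e3 + f • p e2 e3)
      (a' • p e0 e1 + b' • p e0 e2 + c' • p e0 e3 + d' • p e1 e2 + e' • p e1 e3 + f' • p e2 e3)
    = (a * f' + f * a' - b * e' - e * b' + c * d' + d * c') * B (p e0 e1) (p e2 e3) := by
  have h2 : ∀ a b c, B (p a b) (p c a) = 0 := fun a b c => by
    rw [panti c a, map_neg, h1, neg_zero]
  have h3 : ∀ a b c, B (p a b) (p b c) = 0 := fun a b c => by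
    rw [panti a b, map_neg, LinearMap.neg_apply, h1, neg_zero]
  have h4 : ∀ a b c, B (p a b) (p c b) = 0 := fun a b c => by
    rw [panti c b, map_neg, h3, neg_zero]
  have r1 : ∀ a b c d, B (p a b) (p c d) = - B (p c b) (p a d) := fun a b c d => by
    have := h1 (a + c) b d
    simp only [map_add, LinearMap.add_apply, h1] at this
    linear_combination this
  have r3 : ∀ a b c d, B (p a b) (p c d) = - B (p a c) (p b d) := fun a b c d => by
    have := h3 a (b + c) d
    simp only [map_add, LinearMap.add_apply, h3] at this
    linear_combination this
  have r4 : ∀ a b c d, B (p a b) (p c d) = - B (p a b) (p d c) := fun a b c d => by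
    rw [panti c d, map_neg]
  have r5 : ∀ a b c d, B (p a b) (p c d) = - B (p b a) (p c d) := fun a b c d => by
    rw [panti a b, map_neg, LinearMap.neg_apply]
  have k1 : B (p e0 e2) (p e1 e3) = - B (p e0 e1) (p e2 e3) := r3 _ _ _ _
  have k2 : B (p e0 e3) (p e1 e2) = B (p e0 e1) (p e2 e3) := by
    rw [r3, r4, neg_neg]
  have k3 : B (p e1 e2) (p e0 e3) = B (p e0 e1) (p e2 e3) := by
    rw [r1, k1, neg_neg]
  have k4 : B (p e1 e3) (p e0 e2) = - B (p e0 e1) (p e2 e3) := by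
    rw [r1, k2]
  have k5 : B (p e2 e3) (p e0 e1) = B (p e0 e1) (p e2 e3) := by
    linear_combination r3 e2 e3 e0 e1 - r5 e2 e0 e3 e1 + r4 e0 e2 e3 e1 - k1
  simp only [map_add, map_smul, LinearMap.add_apply, LinearMap.smul_apply, h1, h2, h3, h4,
    k1, k2, k3, k4, k5, smul_eq_mul]
  ring

theorem rank1 {K : Type*} [Field K] (b c d e : K) (h : b * e = c * d) :
    ∃ s t m n : K, b = s * m ∧ c = s * n ∧ d = t * m ∧ e = t * n := by
  by_cases hb : b = 0
  · by_cases hc : c = 0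
    · exact ⟨0, 1, d, e, by simp [hb], by simp [hc], by simp, by simp⟩
    · refine ⟨c, e, 0, 1, by simp [hb], by simp, ?_, by simp⟩
      have : c * d = 0 := by rw [← h, hb, zero_mul]
      simpa [hc] using this
  · refine ⟨b, d, 1, c / b, by simp, by field_simp, by simp, ?_⟩
    field_simp
    linear_combination h

theorem two_basis {K V : Type*} [Field K] [AddCommGroup V] [Module K V]
    (U : Submodule K V) (hU : Module.finrank K U = 2) :
    ∃ u1 u2 : V, u1 ∈ U ∧ u2 ∈ U ∧
        (∀ r s : K, r • u1 + s • u2 = 0 → r = 0 ∧ s = 0) ∧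
        (∀ x ∈ U, ∃ r s : K, x = r • u1 + s • u2) := by
  have : FiniteDimensional K U := Module.finite_of_finrank_eq_succ hU
  let bs := Module.finBasisOfFinrankEq K U hU
  refine ⟨bs 0, bs 1, (bs 0).2, (bs 1).2, ?_, ?_⟩
  · intro r s h
    have h' : r • bs 0 + s • bs 1 = 0 := by
      apply Subtype.ext
      exact h
    have h2 := Fintype.linearIndependent_iff.mp bs.linearIndependent ![r, s]
      (by rw [Fin.sum_univ_two]; exact h')
    exact ⟨h2 0, h2 1⟩
  · intro x hx
    refine ⟨bs.repr ⟨x, hx⟩ 0, bs.repr ⟨x, hx⟩ 1, ?_⟩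
    have := bs.sum_repr ⟨x, hx⟩
    rw [Fin.sum_univ_two] at this
    exact (congrArg Subtype.val this).symm

/-- A 2-dimensional subspace `U ⊆ ⋀²W` is totally isotropic for `B` iff there is a flag
`N ⊆ H ⊆ W` with `dim N = 1`, `dim H = 3` such that `U = span{v ∧ w : v ∈ N, w ∈ H}`. -/
theorem stmt_12 (K : Type*) [Field K] (hK2 : (2 : K) ≠ 0)
    (W : Type*) [AddCommGroup W] [Module K W] [FiniteDimensional K W]
    (hW : Module.finrank K W = 4)
    (wedge : ⋀[K]^2 W →ₗ[K] ⋀[K]^2 W →ₗ[K] ⋀[K]^4 W)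
    (hwedge : ∀ x y : ⋀[K]^2 W,
      (wedge x y : ExteriorAlgebra K W) = (x : ExteriorAlgebra K W) * (y : ExteriorAlgebra K W))
    (θ : ⋀[K]^4 W →ₗ[K] K) (hθ : θ ≠ 0)
    (B : ⋀[K]^2 W →ₗ[K] ⋀[K]^2 W →ₗ[K] K)
    (hB : ∀ x y : ⋀[K]^2 W, B x y = θ (wedge x y))
    (U : Submodule K (⋀[K]^2 W)) (hU : Module.finrank K U = 2) :
    (∀ u ∈ U, ∀ u' ∈ U, B u u' = 0) ↔
      ∃ (N H : Submodule K W), N ≤ H ∧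
        Module.finrank K N = 1 ∧ Module.finrank K H = 3 ∧
        U = Submodule.span K {x : ⋀[K]^2 W | ∃ v ∈ N, ∃ w ∈ H,
          (x : ExteriorAlgebra K W) = ExteriorAlgebra.ι K v * ExteriorAlgebra.ι K w} := by
  obtain ⟨p, hp⟩ := exists_pairing K W
  have pc : ∀ v w, (p v w : ExteriorAlgebra K W)
      = ExteriorAlgebra.ι K v * ExteriorAlgebra.ι K w := by
    intro v w
    rw [hp]
    simp [ExteriorAlgebra.ιMulti_apply]
  have palt : ∀ v, p v v = 0 := by
    intro v
    ext
    rw [pc]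
    simp
  have panti : ∀ v w, p v w = - p w v := by
    intro v w
    have := palt (v + w)
    simp only [map_add, LinearMap.add_apply, palt] at this
    rw [eq_neg_iff_add_eq_zero]
    simpa [add_comm] using this
  have h1 : ∀ a b c, B (p a b) (p a c) = 0 := by
    intro a b c
    have : wedge (p a b) (p a c) = 0 := by
      ext
      rw [hwedge, panti a b]
      simp only [NegMemClass.coe_neg, pc, neg_mul, ZeroMemClass.coe_zero, neg_eq_zero]
      rw [mul_assoc, ← mul_assoc (ExteriorAlgebra.ι K a) (ExteriorAlgebra.ι K a)]
      simp
    rw [hB, this, map_zero]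
  have hset : ∀ N H : Submodule K W, {x : ⋀[K]^2 W | ∃ v ∈ N, ∃ w ∈ H,
          (x : ExteriorAlgebra K W) = ExteriorAlgebra.ι K v * ExteriorAlgebra.ι K w}
      = {x | ∃ v ∈ N, ∃ w ∈ H, x = p v w} := by
    intro N H
    ext x
    simp only [Set.mem_ofPred_eq, ← pc, Subtype.ext_iff]
  simp only [hset]
  constructor
  · intro hiso
    have hne : ∀ e0 e1 e2 e3 : W, Sp4 K e0 e1 e2 e3 → B (p e0 e1) (p e2 e3) ≠ 0 := by
      intro e0 e1 e2 e3 hs h0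
      apply hθ
      have htop : ⊤ ≤ Submodule.span K (Set.range ![e0, e1, e2, e3]) := by
        rintro w -
        obtain ⟨a, b, c, d, rfl⟩ := hs w
        have hm : ∀ i, ![e0, e1, e2, e3] i ∈ Submodule.span K (Set.range ![e0, e1, e2, e3]) :=
          fun i => Submodule.subset_span ⟨i, rfl⟩
        exact add_mem (add_mem (add_mem (Submodule.smul_mem _ _ (hm 0))
          (Submodule.smul_mem _ _ (hm 1))) (Submodule.smul_mem _ _ (hm 2)))
          (Submodule.smul_mem _ _ (hm 3))
      let bs := basisOfTopLeSpanOfCardEqFinrank ![e0, e1, e2, e3] htop (by simp [hW])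
      have hbs : (bs : Fin 4 → W) = ![e0, e1, e2, e3] :=
        coe_basisOfTopLeSpanOfCardEqFinrank _ _ _
      apply exteriorPower.linearMap_ext
      have h2 := AlternatingMap.eq_smul_basis_det bs (θ.compAlternatingMap (exteriorPower.ιMulti K 4))
      rw [h2]
      have h3 : (θ.compAlternatingMap (exteriorPower.ιMulti K 4)) bs = 0 := by
        rw [hbs, ← h0, hB]
        simp only [LinearMap.compAlternatingMap_apply]
        congr 1
        ext
        rw [hwedge, pc, pc]
        simp [ExteriorAlgebra.ιMulti_apply, mul_assoc]
      rw [h3, zero_smul]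
      rfl
    obtain ⟨e0, e1, e2, e3, hs⟩ : ∃ e0 e1 e2 e3 : W, Sp4 K e0 e1 e2 e3 := by
      let bs := Module.finBasisOfFinrankEq K W hW
      refine ⟨bs 0, bs 1, bs 2, bs 3, fun w => ⟨bs.repr w 0, bs.repr w 1, bs.repr w 2,
        bs.repr w 3, ?_⟩⟩
      exact (bs.sum_repr w).symm.trans (Fin.sum_univ_four _)
    obtain ⟨u1, u2, hu1, hu2, hli, hUs⟩ : ∃ u1 u2 : ⋀[K]^2 W, u1 ∈ U ∧ u2 ∈ U ∧
        (∀ r s : K, r • u1 + s • u2 = 0 → r = 0 ∧ s = 0) ∧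
        (∀ x ∈ U, ∃ r s : K, x = r • u1 + s • u2) := by
      exact two_basis U hU
    have hu10 : u1 ≠ 0 := by
      rintro rfl
      have := hli 1 0 (by simp)
      simp at this
    obtain ⟨v, w, y, z, hs', hvw⟩ : ∃ v w y z, Sp4 K v w y z ∧ u1 = p v w := by
      obtain ⟨a, b, c, d, e, f, hx⟩ := expand6 p hp palt panti hs u1
      refine decomp p palt panti hs u1 a b c d e f hx ?_ hu10
      have := hiso u1 hu1 u1 hu1
      rw [hx, Bxy p B panti h1] at this
      have h := (mul_eq_zero.mp this).resolve_right (hne _ _ _ _ hs)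
      apply (mul_eq_zero.mp (_ : (2 : K) * _ = 0)).resolve_left hK2
      linear_combination h
    have hδ := hne _ _ _ _ hs'
    obtain ⟨a, b, c, d, e, f, hx⟩ := expand6 p hp palt panti hs' u2
    have hf : f = 0 := by
      have := hiso u1 hu1 u2 hu2
      have h2 := Bxy p B panti h1 v w y z 1 0 0 0 0 0 a b c d e f
      rw [← hx] at h2
      simp only [one_smul, zero_smul, add_zero, ← hvw] at h2
      rw [this, hvw] at h2
      simpa [hδ] using h2.symm
    have hpl : b * e = c * d := by
      have := hiso u2 hu2 u2 hu2
      rw [hx, Bxy p B panti h1, hf] at this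
      have h := (mul_eq_zero.mp this).resolve_right hδ
      have h' : (2 : K) * (b * e - c * d) = 0 := by linear_combination -h
      exact sub_eq_zero.mp ((mul_eq_zero.mp h').resolve_left hK2)
    obtain ⟨s, t, m, n, rfl, rfl, rfl, rfl⟩ := rank1 b c d e hpl
    have hx' : u2 = a • u1 + p (s • v + t • w) (m • y + n • z) := by
      rw [hx, hvw, hf]
      simp only [map_add, map_smul, LinearMap.add_apply, LinearMap.smul_apply]
      module
    obtain ⟨q, hq⟩ : ∃ q, u1 = p (s • v + t • w) q := by
      by_cases hs0 : s = 0
      · by_cases ht0 : t = 0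
        · exfalso
          have := (hli a (-1) (by
            rw [hx', hs0, ht0]
            simp only [zero_smul, add_zero, map_zero, LinearMap.zero_apply]
            module)).2
          simp at this
        · refine ⟨-(t⁻¹ • v), ?_⟩
          rw [hvw, hs0, panti v w]
          simp [smul_smul, ht0]
      · refine ⟨s⁻¹ • w, ?_⟩
        rw [hvw]
        simp [smul_smul, hs0, palt]
    generalize s • v + t • w = v' at hx' hq
    generalize m • y + n • z = z' at hx'
    have hli' : ∀ r s : K, r • p v' q + s • p v' z' = 0 → r = 0 ∧ s = 0 := by
      intro r s h
      have h2 : p v' z' = u2 - a • u1 := by rw [hx']; module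
      rw [← hq, h2] at h
      have := hli (r - s * a) s (by rw [← h]; module)
      obtain ⟨h3, h4⟩ := this
      refine ⟨?_, h4⟩
      simpa [h4] using h3
    have hv' : v' ≠ 0 := by
      rintro rfl
      exact hu10 (by rw [hq]; simp)
    have hind : LinearIndependent K ![v', q, z'] := by
      rw [Fintype.linearIndependent_iff]
      intro g hg
      simp only [Fin.sum_univ_three] at hg
      change g 0 • v' + g 1 • q + g 2 • z' = 0 at hg
      have h2 := congrArg (p v') hg
      simp only [map_add, map_smul, palt, smul_zero, zero_add, map_zero] at h2
      obtain ⟨g1, g2⟩ := hli' _ _ h2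
      have g0 : g 0 = 0 := by simpa [g1, g2, hv'] using hg
      intro i
      fin_cases i
      · exact g0
      · exact g1
      · exact g2
    refine ⟨Submodule.span K {v'}, Submodule.span K (Set.range ![v', q, z']), ?_, ?_, ?_, ?_⟩
    · rw [Submodule.span_singleton_le_iff_mem]
      exact Submodule.subset_span ⟨0, rfl⟩
    · exact finrank_span_singleton hv'
    · rw [finrank_span_eq_card hind]; simp
    · apply le_antisymm
      · intro x hxU
        obtain ⟨r, k, rfl⟩ := hUs x hxU
        have hz : p v' z' ∈ Submodule.span K {x | ∃ v ∈ Submodule.span K {v'}, ∃ w ∈ Submodule.span K (Set.range ![v', q, z']), x = p v w} :=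
          Submodule.subset_span ⟨v', Submodule.mem_span_singleton_self _, z',
            Submodule.subset_span ⟨2, rfl⟩, rfl⟩
        have hq' : u1 ∈ Submodule.span K {x | ∃ v ∈ Submodule.span K {v'}, ∃ w ∈ Submodule.span K (Set.range ![v', q, z']), x = p v w} :=
          Submodule.subset_span ⟨v', Submodule.mem_span_singleton_self _, q,
            Submodule.subset_span ⟨1, rfl⟩, hq⟩
        rw [hx']
        exact add_mem (Submodule.smul_mem _ _ hq') (Submodule.smul_mem _ _
          (add_mem (Submodule.smul_mem _ _ hq') hz))
      · rw [Submodule.span_le]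
        rintro x ⟨v1, hv1, w1, hw1, rfl⟩
        obtain ⟨r, rfl⟩ := Submodule.mem_span_singleton.mp hv1
        have hz : p v' z' ∈ U := by
          have h2 : p v' z' = u2 - a • u1 := by rw [hx']; module
          rw [h2]
          exact sub_mem hu2 (Submodule.smul_mem _ _ hu1)
        rw [map_smul, LinearMap.smul_apply]
        apply Submodule.smul_mem
        have : Submodule.span K (Set.range ![v', q, z']) ≤ U.comap (p v') := by
          rw [Submodule.span_le]
          rintro _ ⟨i, rfl⟩
          fin_cases i
          · simp [palt]
          · simpa [← hq] using hu1
          · simpa using hz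
        exact this hw1
  · rintro ⟨N, H, hNH, hN, hH, rfl⟩ u hu u' hu'
    obtain ⟨n, -, hn⟩ := finrank_eq_one_iff'.mp hN
    induction hu, hu' using Submodule.span_induction₂ with
    | mem_mem x y hx hy =>
      obtain ⟨v, hv, w, hw, rfl⟩ := hx
      obtain ⟨v', hv', w', hw', rfl⟩ := hy
      obtain ⟨r, hr⟩ := hn ⟨v, hv⟩
      obtain ⟨r', hr'⟩ := hn ⟨v', hv'⟩
      have e1 : r • (n : W) = v := congrArg Subtype.val hr
      have e2 : r' • (n : W) = v' := congrArg Subtype.val hr'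
      rw [← e1, ← e2]
      simp [h1]
    | zero_left => simp
    | zero_right => simp
    | add_left x y z _ _ _ h1 h2 => simp [h1, h2]
    | add_right x y z _ _ _ h1 h2 => simp [h1, h2]
    | smul_left r x y _ _ h => simp [h]
    | smul_right r x y _ _ h => simp [h]
end

section
/- A 2-dimensional subspace U ⊆ S is totally isotropic for B if and only if there exists a 1-dimensional subspace N ⊆ W such that U = span{v ∧ w : v ∈ N, w ∈ N^⊥}, where N^⊥ = {w ∈ W : α(v, w) = 0 for all v ∈ N} (a 3-dimensional subspace containing N). -/
lemma aux_mem2 {K W : Type*} [Field K] [AddCommGroup W] [Module K W]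
    {p : ExteriorAlgebra K W → Prop}
    (h1 : ∀ a b, p (ExteriorAlgebra.ι K a * ExteriorAlgebra.ι K b))
    (h2 : ∀ x y, p x → p y → p (x + y)) (x : ⋀[K]^2 W) : p x := by
  obtain ⟨x, hx⟩ := x
  have hx' : x ∈ (LinearMap.range (ExteriorAlgebra.ι K : W →ₗ[K] _)) *
      (LinearMap.range (ExteriorAlgebra.ι K : W →ₗ[K] _)) := by
    rw [← pow_two]; exact hx
  change p x
  clear hx
  induction hx' using Submodule.mul_induction_on' with
  | add x _ y _ h h' => exact h2 x y h h'
  | mem_mul_mem m hm n hn =>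
    obtain ⟨a, rfl⟩ := hm
    obtain ⟨b, rfl⟩ := hn
    exact h1 a b

noncomputable def auxC {K W : Type*} [Field K] [AddCommGroup W] [Module K W]
    (d : Module.Dual K W) : ExteriorAlgebra K W →ₗ[K] ExteriorAlgebra K W :=
  CliffordAlgebra.contractLeft (Q := (0 : QuadraticForm K W)) d

lemma auxC_mul {K W : Type*} [Field K] [AddCommGroup W] [Module K W]
    (d : Module.Dual K W) (a : W) (b : ExteriorAlgebra K W) :
    auxC d (ExteriorAlgebra.ι K a * b) = d a • b - ExteriorAlgebra.ι K a * auxC d b :=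
  CliffordAlgebra.contractLeft_ι_mul d a b

lemma auxC_ι {K W : Type*} [Field K] [AddCommGroup W] [Module K W]
    (d : Module.Dual K W) (a : W) :
    auxC d (ExteriorAlgebra.ι K a) = algebraMap K _ (d a) :=
  CliffordAlgebra.contractLeft_ι _ d a

lemma auxC_ιι {K W : Type*} [Field K] [AddCommGroup W] [Module K W]
    (d : Module.Dual K W) (a b : W) :
    auxC d (ExteriorAlgebra.ι K a * ExteriorAlgebra.ι K b) =
      ExteriorAlgebra.ι K (d a • b - d b • a) := by
  rw [auxC_mul, auxC_ι, ← Algebra.commutes, ← Algebra.smul_def]; simp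

lemma auxC_range {K W : Type*} [Field K] [AddCommGroup W] [Module K W]
    (d : Module.Dual K W) (x : ⋀[K]^2 W) :
    ∃ w, auxC d (x : ExteriorAlgebra K W) = ExteriorAlgebra.ι K w := by
  refine aux_mem2 (p := fun x => ∃ w, auxC d x = ExteriorAlgebra.ι K w) ?_ ?_ x
  · intro a b
    exact ⟨_, auxC_ιι d a b⟩
  · rintro x y ⟨a, ha⟩ ⟨b, hb⟩
    exact ⟨a + b, by simp [ha, hb]⟩

lemma auxC_der {K W : Type*} [Field K] [AddCommGroup W] [Module K W]
    (d : Module.Dual K W) (x : ⋀[K]^2 W) (y : ExteriorAlgebra K W) :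
    auxC d (x * y) = auxC d (x : ExteriorAlgebra K W) * y + x * auxC d y := by
  refine aux_mem2 (p := fun x => auxC d (x * y) = auxC d x * y + x * auxC d y) ?_ ?_ x
  · intro a b
    rw [mul_assoc, auxC_mul, auxC_mul, auxC_ιι]
    simp only [map_sub, map_smul, sub_mul, mul_sub, smul_mul_assoc, mul_smul_comm, mul_assoc]
    abel
  · intro x y h1 h2
    simp only [add_mul, map_add, h1, h2]; abel

lemma aux_comm {K W : Type*} [Field K] [AddCommGroup W] [Module K W]
    (x : ⋀[K]^2 W) (c : W) :
    (x : ExteriorAlgebra K W) * ExteriorAlgebra.ι K c = ExteriorAlgebra.ι K c * x := by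
  refine aux_mem2 (p := fun x => x * ExteriorAlgebra.ι K c = ExteriorAlgebra.ι K c * x) ?_ ?_ x
  · intro a b
    have h := fun a b : W => eq_neg_of_add_eq_zero_left (ExteriorAlgebra.ι_add_mul_swap (R := K) a b)
    rw [mul_assoc, h b c, mul_neg, ← mul_assoc, h a c, neg_mul, neg_neg, mul_assoc]
  · intro x y h1 h2
    simp only [add_mul, mul_add, h1, h2]

lemma aux_euler {K W : Type*} [Field K] [AddCommGroup W] [Module K W]
    {n : ℕ} (e : Module.Basis (Fin n) K W) (x : ⋀[K]^2 W) :
    ∑ i, ExteriorAlgebra.ι K (e i) * auxC (e.coord i) (x : ExteriorAlgebra K W)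
      = (2 : K) • (x : ExteriorAlgebra K W) := by
  refine aux_mem2 (p := fun x => ∑ i, ExteriorAlgebra.ι K (e i) * auxC (e.coord i) x
      = (2 : K) • x) ?_ ?_ x
  · intro a b
    have h := eq_neg_of_add_eq_zero_left (ExteriorAlgebra.ι_add_mul_swap (R := K) b a)
    have hs : ∀ a : W, ∑ i, (e.repr a i) • ExteriorAlgebra.ι K (e i) = ExteriorAlgebra.ι K a := by
      intro a
      conv_rhs => rw [← e.sum_repr a]
      simp only [map_sum, map_smul]
    simp only [auxC_ιι, map_sub, map_smul, mul_sub, mul_smul_comm, ← smul_mul_assoc,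
      Finset.sum_sub_distrib, ← Finset.sum_mul, Module.Basis.coord_apply, hs]
    rw [h, two_smul, sub_neg_eq_add, add_mul]
  · intro x y h1 h2
    simp only [map_add, mul_add, Finset.sum_add_distrib, h1, h2, smul_add]

/-- division lemma -/
lemma aux_div {K W : Type*} [Field K] [AddCommGroup W] [Module K W]
    (v : W) (hv : v ≠ 0) : ∃ d : Module.Dual K W, ∀ x : ⋀[K]^2 W,
    ExteriorAlgebra.ι K v * (x : ExteriorAlgebra K W) = 0 →
    (x : ExteriorAlgebra K W) = ExteriorAlgebra.ι K v * auxC d (x : ExteriorAlgebra K W) := by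
  obtain ⟨d, hd⟩ : ∃ d : Module.Dual K W, d v = 1 := by
    by_contra! h
    apply hv
    rw [← Module.forall_dual_apply_eq_zero_iff K]
    intro f
    by_contra hf
    exact h ((f v)⁻¹ • f) (by simp [hf])
  refine ⟨d, fun x hx => ?_⟩
  have := auxC_mul d v (x : ExteriorAlgebra K W)
  rw [hx, map_zero, hd, one_smul] at this
  exact (sub_eq_zero.mp this.symm)

lemma aux_decomp {K W : Type*} [Field K] (hK2 : (2 : K) ≠ 0) [AddCommGroup W] [Module K W]
    [FiniteDimensional K W]
    (x : ⋀[K]^2 W) (hx0 : x ≠ 0) (hx : (x : ExteriorAlgebra K W) * x = 0) :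
    ∃ a b, (x : ExteriorAlgebra K W) = ExteriorAlgebra.ι K a * ExteriorAlgebra.ι K b := by
  obtain ⟨i, hi⟩ : ∃ i, auxC ((Module.finBasis K W).coord i) (x : ExteriorAlgebra K W) ≠ 0 := by
    by_contra! h
    have := aux_euler (Module.finBasis K W) x
    simp only [h, mul_zero, Finset.sum_const_zero] at this
    have h2 := (smul_eq_zero.mp this.symm).resolve_left hK2
    exact hx0 (Subtype.ext h2)
  set d := (Module.finBasis K W).coord i
  obtain ⟨v, hv⟩ := auxC_range d x
  have hv0 : v ≠ 0 := by
    rintro rfl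
    exact hi (by rw [hv, map_zero])
  have h := auxC_der d x x
  rw [hx, map_zero, hv, aux_comm, ← two_smul K] at h
  have h2 := (smul_eq_zero.mp h.symm).resolve_left hK2
  obtain ⟨d', hd'⟩ := aux_div (K := K) v hv0
  obtain ⟨w, hw⟩ := auxC_range d' x
  exact ⟨v, w, by rw [← hw]; exact hd' x h2⟩

lemma aux_dep {K W : Type*} [Field K] [AddCommGroup W] [Module K W]
    [FiniteDimensional K W] (hW : Module.finrank K W = 4) (f : Fin 4 → W)
    (h : ExteriorAlgebra.ι K (f 0) * (ExteriorAlgebra.ι K (f 1) *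
      (ExteriorAlgebra.ι K (f 2) * ExteriorAlgebra.ι K (f 3))) = 0) :
    ¬ LinearIndependent K f := by
  intro hf
  let e := basisOfLinearIndependentOfCardEqFinrank hf (by simp [hW])
  have he : ∀ i j, e.coord i (f j) = if j = i then 1 else 0 := by
    intro i j
    have : f j = e j := by simp [e]
    rw [this, Module.Basis.coord_apply, Module.Basis.repr_self, Finsupp.single_apply]
  have h0 := congrArg (fun x => auxC (e.coord 3) (auxC (e.coord 2) (auxC (e.coord 1)
    (auxC (e.coord 0) x)))) h
  simp [auxC_mul, auxC_ι, he] at h0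

lemma aux_common {K W : Type*} [Field K] [AddCommGroup W] [Module K W]
    [FiniteDimensional K W] (hW : Module.finrank K W = 4) (a b c d : W)
    (h1 : ExteriorAlgebra.ι K a * ExteriorAlgebra.ι K b ≠ 0)
    (h2 : ExteriorAlgebra.ι K c * ExteriorAlgebra.ι K d ≠ 0)
    (h : ExteriorAlgebra.ι K a * ExteriorAlgebra.ι K b *
      (ExteriorAlgebra.ι K c * ExteriorAlgebra.ι K d) = 0) :
    ∃ v : W, v ≠ 0 ∧
      ExteriorAlgebra.ι K v * (ExteriorAlgebra.ι K a * ExteriorAlgebra.ι K b) = 0 ∧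
      ExteriorAlgebra.ι K v * (ExteriorAlgebra.ι K c * ExteriorAlgebra.ι K d) = 0 := by
  have hd := aux_dep hW ![a, b, c, d] (by simpa [mul_assoc] using h)
  rw [Fintype.not_linearIndependent_iff] at hd
  obtain ⟨g, hg, hi⟩ := hd
  simp only [Fin.sum_univ_four, Matrix.cons_val] at hg
  -- linear dependence of two vectors kills the wedge
  have key : ∀ (p q : W) (s t : K), s • p + t • q = 0 →
      ExteriorAlgebra.ι K p * ExteriorAlgebra.ι K q ≠ 0 → s = 0 ∧ t = 0 := by
    intro p q s t hst hne
    have e1 : ExteriorAlgebra.ι K (s • p + t • q) * ExteriorAlgebra.ι K q = 0 := by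
      rw [hst]; simp
    have e2 : ExteriorAlgebra.ι K p * ExteriorAlgebra.ι K (s • p + t • q) = 0 := by
      rw [hst]; simp
    simp only [map_add, map_smul, add_mul, mul_add, smul_mul_assoc, mul_smul_comm,
      ExteriorAlgebra.ι_sq_zero, smul_zero, add_zero, zero_add] at e1 e2
    exact ⟨(smul_eq_zero.mp e1).resolve_right hne, (smul_eq_zero.mp e2).resolve_right hne⟩
  have kill : ∀ (p q : W) (s t : K), ExteriorAlgebra.ι K (s • p + t • q) *
      (ExteriorAlgebra.ι K p * ExteriorAlgebra.ι K q) = 0 := by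
    intro p q s t
    have hc := eq_neg_of_add_eq_zero_left (ExteriorAlgebra.ι_add_mul_swap (R := K) q p)
    have e1 : ExteriorAlgebra.ι K p * (ExteriorAlgebra.ι K p * ExteriorAlgebra.ι K q) = 0 := by
      rw [← mul_assoc, ExteriorAlgebra.ι_sq_zero, zero_mul]
    have e2 : ExteriorAlgebra.ι K q * (ExteriorAlgebra.ι K p * ExteriorAlgebra.ι K q) = 0 := by
      rw [← mul_assoc, hc, neg_mul, mul_assoc, ExteriorAlgebra.ι_sq_zero, mul_zero, neg_zero]
    simp [add_mul, e1, e2]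
  have hv : g 0 • a + g 1 • b = (-g 2) • c + (-g 3) • d := by
    rw [← sub_eq_zero, ← hg]; module
  refine ⟨g 0 • a + g 1 • b, ?_, kill _ _ _ _, by rw [hv]; exact kill _ _ _ _⟩
  intro h0
  have k1 := key _ _ _ _ h0 h1
  have k2 := key _ _ _ _ (hv.symm.trans h0) h2
  obtain ⟨i, hi⟩ := hi
  apply hi
  fin_cases i
  · exact k1.1
  · exact k1.2
  · exact neg_eq_zero.mp k2.1
  · exact neg_eq_zero.mp k2.2


/-- A 2-dimensional subspace `U ⊆ S = ker α̃` is totally isotropic for `B` iff there is a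
1-dimensional `N ⊆ W` with `U = span{v ∧ w : v ∈ N, w ∈ N^⊥}`, where `N^⊥` is the
`α`-orthogonal complement of `N` in `W`. -/
theorem stmt_13 (K : Type*) [Field K] (hK2 : (2 : K) ≠ 0)
    (W : Type*) [AddCommGroup W] [Module K W] [FiniteDimensional K W]
    (hW : Module.finrank K W = 4)
    (wedge : ⋀[K]^2 W →ₗ[K] ⋀[K]^2 W →ₗ[K] ⋀[K]^4 W)
    (hwedge : ∀ x y : ⋀[K]^2 W,
      (wedge x y : ExteriorAlgebra K W) = (x : ExteriorAlgebra K W) * (y : ExteriorAlgebra K W))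
    (θ : ⋀[K]^4 W →ₗ[K] K) (hθ : θ ≠ 0)
    (B : ⋀[K]^2 W →ₗ[K] ⋀[K]^2 W →ₗ[K] K)
    (hB : ∀ x y : ⋀[K]^2 W, B x y = θ (wedge x y))
    (α : W →ₗ[K] W →ₗ[K] K)
    (hαalt : ∀ v, α v v = 0) (hαnd : ∀ v, (∀ w, α v w = 0) → v = 0)
    (αt : ⋀[K]^2 W →ₗ[K] K)
    (hαt : ∀ (x : ⋀[K]^2 W) (v w : W),
      (x : ExteriorAlgebra K W) = ExteriorAlgebra.ι K v * ExteriorAlgebra.ι K w →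
      αt x = α v w)
    (U : Submodule K (⋀[K]^2 W)) (hUS : U ≤ LinearMap.ker αt)
    (hU : Module.finrank K U = 2) :
    (∀ u ∈ U, ∀ u' ∈ U, B u u' = 0) ↔
      ∃ N : Submodule K W, Module.finrank K N = 1 ∧
        U = Submodule.span K {x : ⋀[K]^2 W | ∃ v ∈ N, ∃ w : W,
          (∀ u ∈ N, α u w = 0) ∧
          (x : ExteriorAlgebra K W) = ExteriorAlgebra.ι K v * ExteriorAlgebra.ι K w} := by
  constructor
  · intro hiso
    have hθi : ∀ z, θ z = 0 → z = 0 := by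
      have h1 : Module.finrank K (⋀[K]^4 W) = 1 := by
        rw [exteriorPower.finrank_eq, hW]; rfl
      intro z hz
      by_contra hz0
      apply hθ
      ext1
      ext m
      obtain ⟨c, hc⟩ := (finrank_eq_one_iff_of_nonzero' z hz0).mp h1 (exteriorPower.ιMulti K 4 m)
      simp [← hc, hz]
    have hmul : ∀ u ∈ U, ∀ u' ∈ U, (u : ExteriorAlgebra K W) * u' = 0 := by
      intro u hu u' hu'
      rw [← hwedge, hθi _ ((hB u u').symm.trans (hiso u hu u' hu'))]
      rfl
    have : Module.Free K U := Module.Free.of_divisionRing K U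
    let e := Module.finBasisOfFinrankEq K U hU
    have he0 : ∀ i, ((e i : U) : ⋀[K]^2 W) ≠ 0 := fun i h => e.ne_zero i (Subtype.ext h)
    obtain ⟨a, b, hab⟩ := aux_decomp hK2 (e 0 : ⋀[K]^2 W) (he0 0)
      (hmul _ (e 0).2 _ (e 0).2)
    obtain ⟨c, d, hcd⟩ := aux_decomp hK2 (e 1 : ⋀[K]^2 W) (he0 1)
      (hmul _ (e 1).2 _ (e 1).2)
    obtain ⟨v, hv0, hv1, hv2⟩ := aux_common hW a b c d
      (by rw [← hab]; exact fun h => he0 0 (Subtype.ext h))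
      (by rw [← hcd]; exact fun h => he0 1 (Subtype.ext h))
      (by rw [← hab, ← hcd]; exact hmul _ (e 0).2 _ (e 1).2)
    rw [← hab] at hv1
    rw [← hcd] at hv2
    have hvU : ∀ u ∈ U, ExteriorAlgebra.ι K v * (u : ExteriorAlgebra K W) = 0 := by
      intro u hu
      have := congrArg (fun z : U => ((z : ⋀[K]^2 W) : ExteriorAlgebra K W))
        (e.sum_repr ⟨u, hu⟩)
      simp only [Fin.sum_univ_two, Submodule.coe_add, Submodule.coe_smul] at this
      rw [← this, mul_add, mul_smul_comm, mul_smul_comm, hv1, hv2, smul_zero, smul_zero, add_zero]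
    obtain ⟨d', hd'⟩ := aux_div (K := K) v hv0
    have hUw : ∀ u ∈ U, ∃ w, α v w = 0 ∧
        (u : ExteriorAlgebra K W) = ExteriorAlgebra.ι K v * ExteriorAlgebra.ι K w := by
      intro u hu
      obtain ⟨w, hw⟩ := auxC_range d' u
      have h := hd' u (hvU u hu)
      rw [hw] at h
      refine ⟨w, ?_, h⟩
      rw [← hαt u v w h]
      exact hUS hu
    let f : W →ₗ[K] ⋀[K]^2 W := LinearMap.codRestrict _
      ((LinearMap.mulLeft K (ExteriorAlgebra.ι K v)).comp (ExteriorAlgebra.ι K)) (by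
        intro w
        change _ ∈ (LinearMap.range (ExteriorAlgebra.ι K : W →ₗ[K] _)) ^ 2
        rw [pow_two]
        exact Submodule.mul_mem_mul (LinearMap.mem_range_self _ v) (LinearMap.mem_range_self _ w))
    have hf : ∀ w, (f w : ExteriorAlgebra K W) =
      ExteriorAlgebra.ι K v * ExteriorAlgebra.ι K w := fun w => rfl
    have hUT : U = (LinearMap.ker (α v)).map f := by
      apply Submodule.eq_of_le_of_finrank_le
      · intro u hu
        obtain ⟨w, hw, h⟩ := hUw u hu
        exact ⟨w, hw, Subtype.ext h.symm⟩
      · rw [hU]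
        have hr : Module.finrank K (LinearMap.range (α v)) = 1 := by
          rw [LinearMap.range_eq_top.mpr (LinearMap.surjective ?_)]
          · simp
          · intro h
            exact hv0 (hαnd v (fun w => by rw [h]; rfl))
        have h1 := LinearMap.finrank_range_add_finrank_ker (α v)
        have h2 := LinearMap.finrank_range_add_finrank_ker (f.domRestrict (LinearMap.ker (α v)))
        rw [LinearMap.range_domRestrict] at h2
        have h3 : 0 < Module.finrank K
            (LinearMap.ker (f.domRestrict (LinearMap.ker (α v)))) := by
          rw [Module.finrank_pos_iff_exists_ne_zero]
          refine ⟨⟨⟨v, hαalt v⟩, ?_⟩, ?_⟩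
          · apply Subtype.ext
            exact ExteriorAlgebra.ι_sq_zero v
          · intro h
            exact hv0 (congrArg (fun z => ((z.1 : LinearMap.ker (α v)) : W)) h)
        omega
    refine ⟨Submodule.span K {v}, finrank_span_singleton hv0, le_antisymm ?_ ?_⟩
    · intro u hu
      obtain ⟨w, hw, h⟩ := hUw u hu
      refine Submodule.subset_span ⟨v, Submodule.mem_span_singleton_self v, w, ?_, h⟩
      intro u hu
      obtain ⟨c, rfl⟩ := Submodule.mem_span_singleton.mp hu
      simp [hw]
    · rw [Submodule.span_le]
      rintro x ⟨v', hv', w, hw, hx⟩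
      obtain ⟨c, rfl⟩ := Submodule.mem_span_singleton.mp hv'
      rw [hUT]
      refine ⟨c • w, ?_, ?_⟩
      · have := hw v (Submodule.mem_span_singleton_self v)
        simp [this]
      · apply Subtype.ext
        rw [hx, hf]
        simp
  · rintro ⟨N, hN, rfl⟩
    obtain ⟨n, hn0, hn⟩ := finrank_eq_one_iff'.mp hN
    have hz : ∀ w w' : W, ExteriorAlgebra.ι K (n : W) * ExteriorAlgebra.ι K w *
        (ExteriorAlgebra.ι K (n : W) * ExteriorAlgebra.ι K w') = 0 := by
      intro w w'
      have hc := eq_neg_of_add_eq_zero_left (ExteriorAlgebra.ι_add_mul_swap (R := K) (n : W) w)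
      rw [hc, neg_mul, mul_assoc, ← mul_assoc (ExteriorAlgebra.ι K (n : W)),
        ExteriorAlgebra.ι_sq_zero, zero_mul, mul_zero, neg_zero]
    intro u hu u' hu'
    induction hu, hu' using Submodule.span_induction₂ with
    | mem_mem x y hx hy =>
      obtain ⟨v, hv, w, -, hx⟩ := hx
      obtain ⟨v', hv', w', -, hy⟩ := hy
      obtain ⟨c, hc⟩ := hn ⟨v, hv⟩
      obtain ⟨c', hc'⟩ := hn ⟨v', hv'⟩
      have hc := congrArg Subtype.val hc
      have hc' := congrArg Subtype.val hc'
      simp only [Submodule.coe_smul] at hc hc'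
      have : wedge x y = 0 := by
        apply Subtype.ext
        rw [hwedge, hx, hy, ← hc, ← hc']
        simp [hz]
      rw [hB, this, map_zero]
    | zero_left => simp
    | zero_right => simp
    | add_left x y z _ _ _ h1 h2 => simp [h1, h2]
    | add_right x y z _ _ _ h1 h2 => simp [h1, h2]
    | smul_left r x y _ _ h => simp [h]
    | smul_right r x y _ _ h => simp [h]
end
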